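/- arXiv:1410.6838 — 7 statements merged into one kernel-verified Lean document; each statement's English description precedes it below -/
import Mathlib

section
/- Transitivity of stable degeneration: let X, Y, Z be finitely generated left A-modules over a finite-dimensional k-algebra A. If X ≤_st Y and Y ≤_st Z, then X ≤_st Z. Concretely: if there are finitely generated projective A-modules P, Q, R, S with X ⊕ P ≤_deg Y ⊕ Q and Y ⊕ R ≤_deg Z ⊕ S, then there are finitely generated projective A-modules P', Q' with X ⊕ P' ≤_deg Z ⊕ Q'. -/
universe u

/-- `DegLE A M N` : `M ≤_deg N`, i.e. there exist a finitely generated `A`-module `Z`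
and a short exact sequence `0 → N → M ⊕ Z → Z → 0`. -/
def DegLE (A : Type u) [Ring A] (M : Type u) [AddCommGroup M] [Module A M]
    (N : Type u) [AddCommGroup N] [Module A N] : Prop :=
  ∃ (Z : Type u) (_ : AddCommGroup Z) (_ : Module A Z), Module.Finite A Z ∧
    ∃ (f : N →ₗ[A] M × Z) (g : M × Z →ₗ[A] Z),
      Function.Injective f ∧ Function.Surjective g ∧ LinearMap.range f = LinearMap.ker g

/-- `StDegLE A X Y` : `X ≤_st Y`, i.e. there exist finitely generated projective
`A`-modules `P` and `Q` with `X ⊕ P ≤_deg Y ⊕ Q`. -/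
def StDegLE (A : Type u) [Ring A] (X : Type u) [AddCommGroup X] [Module A X]
    (Y : Type u) [AddCommGroup Y] [Module A Y] : Prop :=
  ∃ (P : Type u) (_ : AddCommGroup P) (_ : Module A P)
    (Q : Type u) (_ : AddCommGroup Q) (_ : Module A Q),
    Module.Finite A P ∧ Module.Projective A P ∧
    Module.Finite A Q ∧ Module.Projective A Q ∧
    DegLE A (X × P) (Y × Q)

namespace StDeg

/-- adding a direct summand and transporting along isomorphisms -/
theorem DegLE.prod_congr {A : Type u} [Ring A]
    {M N C M' N' : Type u} [AddCommGroup M] [Module A M] [AddCommGroup N] [Module A N]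
    [AddCommGroup C] [Module A C] [AddCommGroup M'] [Module A M'] [AddCommGroup N'] [Module A N']
    (h : DegLE A M N) (eM : (M × C) ≃ₗ[A] M') (eN : (N × C) ≃ₗ[A] N') : DegLE A M' N' := by
  obtain ⟨Z, _, _, hZ, f, g, hf, hg, hfg⟩ := h
  have hex : ∀ x, g x = 0 ↔ ∃ n, f n = x := by
    intro x
    rw [← LinearMap.mem_ker, ← hfg, LinearMap.mem_range]
  let F0 : (N × C) →ₗ[A] M' × Z :=
    LinearMap.prod
      (eM.toLinearMap ∘ₗ LinearMap.prod
        (LinearMap.fst A M Z ∘ₗ f ∘ₗ LinearMap.fst A N C) (LinearMap.snd A N C))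
      (LinearMap.snd A M Z ∘ₗ f ∘ₗ LinearMap.fst A N C)
  let G : M' × Z →ₗ[A] Z :=
    g ∘ₗ LinearMap.prod
      (LinearMap.fst A M C ∘ₗ eM.symm.toLinearMap ∘ₗ LinearMap.fst A M' Z)
      (LinearMap.snd A M' Z)
  have hF0 : ∀ n c, F0 (n, c) = (eM ((f n).1, c), (f n).2) := fun n c => rfl
  have hG : ∀ x z, G (x, z) = g ((eM.symm x).1, z) := fun n c => rfl
  refine ⟨Z, _, _, hZ, F0 ∘ₗ eN.symm.toLinearMap, G, ?_, ?_, ?_⟩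
  · have : Function.Injective F0 := by
      rintro ⟨n, c⟩ ⟨n', c'⟩ h
      rw [hF0, hF0, Prod.mk.injEq] at h
      obtain ⟨h1, h2⟩ := h
      have h1 := eM.injective h1
      rw [Prod.mk.injEq] at h1
      rw [Prod.mk.injEq]
      exact ⟨hf (Prod.ext h1.1 h2), h1.2⟩
    exact this.comp eN.symm.injective
  · intro z
    obtain ⟨⟨m, w⟩, h⟩ := hg z
    refine ⟨(eM (m, 0), w), ?_⟩
    rw [hG]; simpa using h
  · ext ⟨x, z⟩
    rw [LinearMap.mem_range, LinearMap.mem_ker, hG, hex]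
    constructor
    · rintro ⟨y, hy⟩
      refine ⟨(eN.symm y).1, ?_⟩
      change F0 (eN.symm y) = _ at hy
      rw [← Prod.mk.eta (p := eN.symm y), hF0, Prod.mk.injEq] at hy
      obtain ⟨h1, h2⟩ := hy
      rw [← h1, ← h2]; simp
    · rintro ⟨n, hn⟩
      refine ⟨eN (n, (eM.symm x).2), ?_⟩
      change F0 (eN.symm _) = _
      rw [eN.symm_apply_apply, hF0, hn]
      simp

/-- shift of a sequence -/
def shift {M : Type u} [Zero M] (f : ℕ → M) : ℕ → M
  | 0 => 0
  | n + 1 => f n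

/-- tail of a sequence -/
def tail {M : Type u} (f : ℕ → M) : ℕ → M := fun n => f (n + 1)

theorem shift_tail {M : Type u} [Zero M] (f : ℕ → M) (h : f 0 = 0) : shift (tail f) = f := by
  funext n; cases n with
  | zero => exact h.symm
  | succ n => rfl

/-- `Γ` is the graph of the projection `Q → Q / tQ ≅ N` for a lattice `Q ⊆ M[[t]]`. -/
def Lat (A : Type u) [Ring A] (M N : Type u) [AddCommGroup M] [Module A M]
    [AddCommGroup N] [Module A N] : Prop :=
  ∃ (Γ : Submodule A ((ℕ → M) × N)) (s : ℕ),
    (∀ n, ((0 : ℕ → M), n) ∈ Γ → n = 0) ∧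
    (∀ n, ∃ q, (q, n) ∈ Γ) ∧
    (∀ q n, (q, n) ∈ Γ → (shift q, (0 : N)) ∈ Γ) ∧
    (∀ q, (q, (0 : N)) ∈ Γ → q 0 = 0 ∧ ∃ n, (tail q, n) ∈ Γ) ∧
    (∀ q : ℕ → M, (∀ i < s, q i = 0) → (q, (0 : N)) ∈ Γ)

theorem Lat.trans {A : Type u} [Ring A] {M N L : Type u} [AddCommGroup M] [Module A M]
    [AddCommGroup N] [Module A N] [AddCommGroup L] [Module A L]
    (h1 : Lat A M N) (h2 : Lat A N L) : Lat A M L := by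
  obtain ⟨Γ, s, a1, a2, a3, a4, a5⟩ := h1
  obtain ⟨Δ, r, b1, b2, b3, b4, b5⟩ := h2
  let slice : ℕ → (ℕ → M) → ℕ → M := fun i f l => f (i + (r + 1) * l)
  let Γ' : Submodule A ((ℕ → M) × L) :=
    { carrier := {x | ∃ h : ℕ → N, (∀ i < r + 1, (slice i x.1, h i) ∈ Γ) ∧ (h, x.2) ∈ Δ}
      zero_mem' := ⟨0, fun i _ => Γ.zero_mem, Δ.zero_mem⟩
      add_mem' := by
        rintro x y ⟨h, p1, p2⟩ ⟨h', p1', p2'⟩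
        exact ⟨h + h', fun i hi => Γ.add_mem (p1 i hi) (p1' i hi), Δ.add_mem p2 p2'⟩
      smul_mem' := by
        rintro c x ⟨h, p1, p2⟩
        exact ⟨c • h, fun i hi => Γ.smul_mem c (p1 i hi), Δ.smul_mem c p2⟩ }
  have hmem : ∀ f l, (f, l) ∈ Γ' ↔
      ∃ h : ℕ → N, (∀ i < r + 1, (slice i f, h i) ∈ Γ) ∧ (h, l) ∈ Δ := fun f l => Iff.rfl
  refine ⟨Γ', (r + 1) * s, ?_, ?_, ?_, ?_, ?_⟩
  · intro l hl
    obtain ⟨h, p1, p2⟩ := (hmem _ _).1 hl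
    have hh : (h, (0 : L)) ∈ Δ := b5 h fun i hi => a1 _ (p1 i (by omega))
    have := Δ.sub_mem p2 hh
    rw [Prod.mk_sub_mk, sub_self, sub_zero] at this
    exact b1 _ this
  · intro l
    obtain ⟨h, hh⟩ := b2 l
    choose q hq using a2
    refine ⟨fun n => q (h (n % (r + 1))) (n / (r + 1)), (hmem _ _).2 ⟨h, fun i hi => ?_, hh⟩⟩
    have : slice i (fun n => q (h (n % (r + 1))) (n / (r + 1))) = q (h i) := by
      funext l
      simp only [slice]
      rw [Nat.add_mul_mod_self_left, Nat.mod_eq_of_lt hi, Nat.add_mul_div_left _ _ (by omega),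
        Nat.div_eq_of_lt hi, zero_add]
    rw [this]; exact hq _
  · intro f l hf
    obtain ⟨h, p1, p2⟩ := (hmem _ _).1 hf
    refine (hmem _ _).2 ⟨shift h, fun i hi => ?_, b3 _ _ p2⟩
    cases i with
    | zero =>
      have : slice 0 (shift f) = shift (slice r f) := by
        funext l
        cases l with
        | zero => rfl
        | succ l =>
          change shift f (0 + (r + 1) * (l + 1)) = f (r + (r + 1) * l)
          rw [show 0 + (r + 1) * (l + 1) = (r + (r + 1) * l) + 1 by ring]
          rfl
      rw [this]
      exact a3 _ _ (p1 r (by omega))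
    | succ i =>
      have : slice (i + 1) (shift f) = slice i f := by
        funext l
        change shift f (i + 1 + (r + 1) * l) = f (i + (r + 1) * l)
        rw [show i + 1 + (r + 1) * l = (i + (r + 1) * l) + 1 by ring]
        rfl
      rw [this]
      exact p1 i (by omega)
  · intro f hf
    obtain ⟨h, p1, p2⟩ := (hmem _ _).1 hf
    obtain ⟨h0, l', hl'⟩ := b4 _ p2
    have q0 := p1 0 (by omega)
    rw [h0] at q0
    obtain ⟨f0, n', hn'⟩ := a4 _ q0
    refine ⟨f0, l', (hmem _ _).2 ⟨Function.update (tail h) r n', fun i hi => ?_, ?_⟩⟩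
    · by_cases hir : i = r
      · subst hir
        have : slice i (tail f) = tail (slice 0 f) := by
          funext l
          change f (i + (i + 1) * l + 1) = f (0 + (i + 1) * (l + 1))
          congr 1; ring
        rw [this, Function.update_self]
        exact hn'
      · have : slice i (tail f) = slice (i + 1) f := by
          funext l
          change f (i + (r + 1) * l + 1) = f (i + 1 + (r + 1) * l)
          congr 1; ring
        rw [this, Function.update_of_ne hir]
        exact p1 (i + 1) (by omega)
    · have h5 := b5 (Function.update (tail h) r n' - tail h) (fun i hi => by
        rw [Pi.sub_apply, Function.update_of_ne (by omega), sub_self])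
      have := Δ.add_mem h5 hl'
      rwa [Prod.mk_add_mk, sub_add_cancel, zero_add] at this
  · intro f hf
    refine (hmem _ _).2 ⟨0, fun i hi => a5 _ fun j hj => hf _ ?_, Δ.zero_mem⟩
    calc i + (r + 1) * j < (r + 1) * (j + 1) := by rw [mul_add]; omega
      _ ≤ (r + 1) * s := Nat.mul_le_mul_left _ hj

theorem Lat.of_nilp {A : Type u} [Ring A] {M N Z : Type u} [AddCommGroup M] [Module A M]
    [AddCommGroup N] [Module A N] [AddCommGroup Z] [Module A Z]
    (f : N →ₗ[A] M × Z) (a : M →ₗ[A] Z) (b : Z →ₗ[A] Z) (s : ℕ) (hb : b ^ s = 0)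
    (hf : Function.Injective f) (hs : ∀ z, ∃ m w, a m + b w = z)
    (hex : ∀ m z, a m + b z = 0 ↔ ∃ n, f n = (m, z)) : Lat A M N := by
  let θ : (ℕ → M) →ₗ[A] Z :=
    ∑ i ∈ Finset.range s, (b ^ i) ∘ₗ a ∘ₗ LinearMap.proj i
  have hθ : ∀ q, θ q = ∑ i ∈ Finset.range s, (b ^ i) (a (q i)) := by
    intro q; simp [θ]
  have key : ∀ q, θ q = a (q 0) + b (θ (tail q)) := by
    intro q
    have e1 : θ q = ∑ i ∈ Finset.range (s + 1), (b ^ i) (a (q i)) := by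
      rw [Finset.sum_range_succ, hb, hθ]; simp
    rw [e1, Finset.sum_range_succ', hθ, map_sum, add_comm]
    congr 1
    refine Finset.sum_congr rfl fun i _ => ?_
    rw [pow_succ']; rfl
  have surj : ∀ z, ∃ q, θ q = z := by
    intro z
    choose m w hmw using hs
    have : ∀ j, ∑ i ∈ Finset.range j, (b ^ i) (a (m (w^[i] z))) + (b ^ j) (w^[j] z) = z := by
      intro j
      induction j with
      | zero => simp
      | succ j ih =>
        rw [Finset.sum_range_succ, add_assoc]
        rw [pow_succ, Module.End.mul_apply, ← map_add, Function.iterate_succ_apply', hmw]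
        exact ih
    refine ⟨fun i => m (w^[i] z), ?_⟩
    rw [hθ]
    have := this s
    rw [hb] at this
    simpa using this
  let T : (ℕ → M) →ₗ[A] (ℕ → M) := LinearMap.funLeft A M Nat.succ
  let Γ : Submodule A ((ℕ → M) × N) := LinearMap.eqLocus
    (f ∘ₗ LinearMap.snd A (ℕ → M) N)
    ((LinearMap.prod (LinearMap.proj 0) (θ ∘ₗ T)) ∘ₗ LinearMap.fst A (ℕ → M) N)
  have hmem : ∀ q n, (q, n) ∈ Γ ↔ f n = (q 0, θ (tail q)) := fun q n => Iff.rfl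
  refine ⟨Γ, s + 1, ?_, ?_, ?_, ?_, ?_⟩
  · intro n hn
    rw [hmem] at hn
    apply hf
    rw [hn, map_zero]
    change ((0 : M), θ 0) = 0
    rw [map_zero]; rfl
  · intro n
    obtain ⟨q, hq⟩ := surj (f n).2
    refine ⟨fun i => Nat.casesOn i (f n).1 q, (hmem _ _).2 ?_⟩
    change f n = ((f n).1, θ q)
    rw [hq]
  · intro q n hq
    rw [hmem] at hq ⊢
    have := (hex _ _).2 ⟨n, hq⟩
    rw [← key] at this
    rw [map_zero]
    change _ = ((0 : M), θ q)
    rw [this]; rfl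
  · intro q hq
    rw [hmem, map_zero] at hq
    have h1 : (0 : M) = q 0 := congrArg Prod.fst hq
    have h2 : (0 : Z) = θ (tail q) := congrArg Prod.snd hq
    refine ⟨h1.symm, ?_⟩
    rw [key] at h2
    obtain ⟨n, hn⟩ := (hex _ _).1 h2.symm
    exact ⟨n, (hmem _ _).2 hn⟩
  · intro q hq
    rw [hmem, map_zero, hq 0 (by omega), hθ, Finset.sum_eq_zero]
    · rfl
    · intro i hi
      rw [Finset.mem_range] at hi
      rw [tail, hq _ (by omega), map_zero, map_zero]

theorem Lat.of_deg {A : Type u} [Ring A] [IsArtinianRing A] {M N : Type u} [AddCommGroup M]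
    [Module A M] [AddCommGroup N] [Module A N] (h : DegLE A M N) : Lat A M N := by
  obtain ⟨Z, _, _, hZ, f, g, hf, hg, hfg⟩ := h
  have hex : ∀ x, g x = 0 ↔ ∃ n, f n = x := by
    intro x
    rw [← LinearMap.mem_ker, ← hfg, LinearMap.mem_range]
  let a : M →ₗ[A] Z := g ∘ₗ LinearMap.inl A M Z
  let b : Z →ₗ[A] Z := g ∘ₗ LinearMap.inr A M Z
  have hab : ∀ m z, g (m, z) = a m + b z := by
    intro m z
    simp only [a, b, LinearMap.comp_apply, ← map_add]
    simp
  obtain ⟨n, hn⟩ := Filter.eventually_atTop.1 (LinearMap.eventually_isCompl_ker_pow_range_pow b)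
  have hc := hn (n + 1) (by omega)
  let K := LinearMap.range (b ^ (n + 1))
  have hbK : K ≤ K.comap b := by
    rintro _ ⟨w, rfl⟩
    refine ⟨b w, ?_⟩
    rw [← Module.End.mul_apply, ← Module.End.mul_apply, ← pow_succ, ← pow_succ']
  have hbpow : ∀ j z, ((K.mapQ K b hbK) ^ j) (K.mkQ z) = K.mkQ ((b ^ j) z) := by
    intro j z
    induction j with
    | zero => rfl
    | succ j ih =>
      rw [pow_succ', Module.End.mul_apply, ih, pow_succ', Module.End.mul_apply]
      rfl
  have hKinj : ∀ z ∈ K, b z = 0 → z = 0 := by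
    intro z hz h0
    have : z ∈ LinearMap.ker (b ^ (n + 1)) := by
      rw [LinearMap.mem_ker, pow_succ, Module.End.mul_apply, h0, map_zero]
    exact Submodule.disjoint_def.1 hc.disjoint z this hz
  have hKsurj : ∀ z ∈ K, ∃ w ∈ K, b w = z := by
    rintro _ ⟨w, rfl⟩
    have : w ∈ LinearMap.ker (b ^ (n + 1)) ⊔ LinearMap.range (b ^ (n + 1)) := by
      rw [hc.sup_eq_top]; trivial
    obtain ⟨x, hx, _, ⟨y, rfl⟩, rfl⟩ := Submodule.mem_sup.1 this
    rw [LinearMap.mem_ker] at hx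
    refine ⟨(b ^ (n + 1)) ((b ^ n) y), ⟨_, rfl⟩, ?_⟩
    rw [map_add, hx, zero_add]
    simp only [← Module.End.mul_apply, ← pow_succ', ← pow_add]
    congr 2
  refine Lat.of_nilp (Z := Z ⧸ K)
    (LinearMap.prod (LinearMap.fst A M Z ∘ₗ f) (K.mkQ ∘ₗ LinearMap.snd A M Z ∘ₗ f))
    (K.mkQ ∘ₗ a) (K.mapQ K b hbK) (n + 1) ?_ ?_ ?_ ?_
  · ext z
    change ((K.mapQ K b hbK) ^ (n + 1)) (K.mkQ z) = 0
    rw [hbpow]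
    exact (Submodule.Quotient.mk_eq_zero K).2 ⟨z, rfl⟩
  · rw [injective_iff_map_eq_zero]
    intro x hx
    have h1 : (f x).1 = 0 := congrArg Prod.fst hx
    have h2 : K.mkQ (f x).2 = 0 := congrArg Prod.snd hx
    have h2 : (f x).2 ∈ K := (Submodule.Quotient.mk_eq_zero K).1 h2
    have h3 : g ((f x).1, (f x).2) = 0 := (hex _).2 ⟨x, rfl⟩
    rw [hab, h1, map_zero, zero_add] at h3
    have h4 := hKinj _ h2 h3
    apply hf
    rw [map_zero]
    exact Prod.ext h1 h4
  · intro z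
    obtain ⟨z, rfl⟩ := K.mkQ_surjective z
    obtain ⟨⟨m, w⟩, h⟩ := hg z
    refine ⟨m, K.mkQ w, ?_⟩
    rw [← h, hab, map_add]
    rfl
  · intro m z
    obtain ⟨z, rfl⟩ := K.mkQ_surjective z
    constructor
    · intro h
      have h : K.mkQ (a m + b z) = 0 := by rw [map_add]; exact h
      have h : a m + b z ∈ K := (Submodule.Quotient.mk_eq_zero K).1 h
      obtain ⟨w, hw, hbw⟩ := hKsurj _ h
      have : g (m, z - w) = 0 := by
        rw [hab, map_sub, hbw]; abel
      obtain ⟨x, hx⟩ := (hex _).1 this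
      refine ⟨x, ?_⟩
      change ((f x).1, K.mkQ (f x).2) = _
      rw [hx]
      have hw0 : K.mkQ w = 0 := (Submodule.Quotient.mk_eq_zero K).2 hw
      rw [map_sub, hw0, sub_zero]
    · rintro ⟨x, hx⟩
      have h1 : (f x).1 = m := congrArg Prod.fst hx
      have h2 : K.mkQ (f x).2 = K.mkQ z := congrArg Prod.snd hx
      have h3 : g ((f x).1, (f x).2) = 0 := (hex _).2 ⟨x, rfl⟩
      rw [hab] at h3
      rw [← h1, ← h2]
      change K.mkQ (a (f x).1) + K.mkQ (b (f x).2) = 0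
      rw [← map_add, h3, map_zero]

theorem Lat.to_deg {A : Type u} [Ring A] {M N : Type u} [AddCommGroup M]
    [Module A M] [Module.Finite A M] [AddCommGroup N] [Module A N] (h : Lat A M N) :
    DegLE A M N := by
  obtain ⟨Γ, s, a1, a2, a3, a4, a5⟩ := h
  let T : (ℕ → M) →ₗ[A] (ℕ → M) := LinearMap.funLeft A M Nat.succ
  let S : (ℕ → M) →ₗ[A] (ℕ → M) :=
    { toFun := shift
      map_add' := fun x y => by
        funext i; cases i with
        | zero => exact (add_zero (0 : M)).symm
        | succ i => rfl
      map_smul' := fun c x => by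
        funext i; cases i with
        | zero => exact (smul_zero c).symm
        | succ i => rfl }
  let Q : Submodule A (ℕ → M) := Γ.map (LinearMap.fst A (ℕ → M) N)
  have hQ : ∀ q, q ∈ Q ↔ ∃ n, (q, n) ∈ Γ := by
    intro q
    constructor
    · rintro ⟨⟨q', n⟩, h, rfl⟩; exact ⟨n, h⟩
    · rintro ⟨n, h⟩; exact ⟨_, h, rfl⟩
  have hSQ : Q ≤ Q.comap S := by
    intro q hq
    obtain ⟨n, h⟩ := (hQ _).1 hq
    exact (hQ _).2 ⟨0, a3 _ _ h⟩
  have dec : ∀ q : ℕ → M, Pi.single 0 (q 0) + shift (tail q) = q := by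
    intro q
    funext i; cases i with
    | zero => simp [shift]
    | succ i => simp [shift, tail]
  let C : M →ₗ[A] (ℕ → M) := LinearMap.single A (fun _ : ℕ => M) 0
  let g : M × ((ℕ → M) ⧸ Q) →ₗ[A] ((ℕ → M) ⧸ Q) :=
    LinearMap.coprod (Q.mkQ ∘ₗ C) (Q.mapQ Q S hSQ)
  have hg : ∀ m q, g (m, Q.mkQ q) = Q.mkQ (Pi.single 0 m + shift q) := by
    intro m q; rw [map_add]; rfl
  let φ : Γ →ₗ[A] M × ((ℕ → M) ⧸ Q) :=
    (LinearMap.prod (LinearMap.proj 0) (Q.mkQ ∘ₗ T)) ∘ₗ LinearMap.fst A (ℕ → M) N ∘ₗ Γ.subtype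
  have hφ : ∀ x : Γ, φ x = (x.1.1 0, Q.mkQ (tail x.1.1)) := fun x => rfl
  let π : Γ →ₗ[A] N := LinearMap.snd A (ℕ → M) N ∘ₗ Γ.subtype
  have hπ : Function.Surjective π := by
    intro n
    obtain ⟨q, hq⟩ := a2 n
    exact ⟨⟨_, hq⟩, rfl⟩
  have hker : LinearMap.ker π = LinearMap.ker φ := by
    ext ⟨⟨q, n⟩, hx⟩
    rw [LinearMap.mem_ker, LinearMap.mem_ker, hφ]
    change n = 0 ↔ (q 0, Q.mkQ (tail q)) = 0
    constructor
    · rintro rfl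
      obtain ⟨h0, h⟩ := a4 _ hx
      rw [h0, (Submodule.Quotient.mk_eq_zero Q).2 ((hQ _).2 h) |> (id : _ → Q.mkQ (tail q) = 0)]
      rfl
    · intro h
      have h0 : q 0 = 0 := congrArg Prod.fst h
      have h1 : Q.mkQ (tail q) = 0 := congrArg Prod.snd h
      obtain ⟨n', hn'⟩ := (hQ _).1 ((Submodule.Quotient.mk_eq_zero Q).1 h1)
      have h2 := a3 _ _ hn'
      rw [shift_tail q h0] at h2
      have := Γ.sub_mem hx h2
      rw [Prod.mk_sub_mk, sub_self, sub_zero] at this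
      exact a1 _ this
  let e : N ≃ₗ[A] LinearMap.range φ :=
    (π.quotKerEquivOfSurjective hπ).symm ≪≫ₗ Submodule.quotEquivOfEq _ _ hker ≪≫ₗ
      φ.quotKerEquivRange
  have hfin : Module.Finite A ((ℕ → M) ⧸ Q) := by
    let ext0 : (Fin s → M) →ₗ[A] (ℕ → M) :=
      LinearMap.pi fun i => if h : i < s then LinearMap.proj ⟨i, h⟩ else 0
    refine Module.Finite.of_surjective (Q.mkQ ∘ₗ ext0) ?_
    intro z
    obtain ⟨q, rfl⟩ := Q.mkQ_surjective z
    refine ⟨fun i => q i, ?_⟩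
    rw [LinearMap.comp_apply, ← sub_eq_zero, ← map_sub]
    refine (Submodule.Quotient.mk_eq_zero Q).2 ((hQ _).2 ⟨0, a5 _ fun i hi => ?_⟩)
    simp [ext0, hi]
  refine ⟨(ℕ → M) ⧸ Q, inferInstance, inferInstance, hfin,
    (LinearMap.range φ).subtype ∘ₗ e.toLinearMap, g, ?_, ?_, ?_⟩
  · exact (Submodule.subtype_injective _).comp e.injective
  · intro z
    obtain ⟨q, rfl⟩ := Q.mkQ_surjective z
    exact ⟨(q 0, Q.mkQ (tail q)), by rw [hg, dec]⟩
  · rw [LinearMap.range_comp, LinearEquiv.range, Submodule.map_top, Submodule.range_subtype]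
    ext ⟨m, z⟩
    obtain ⟨q, rfl⟩ := Q.mkQ_surjective z
    rw [LinearMap.mem_ker, hg, LinearMap.mem_range]
    constructor
    · rintro ⟨⟨⟨q', n⟩, hx⟩, h⟩
      rw [hφ] at h
      have h0 : q' 0 = m := congrArg Prod.fst h
      have h1 : Q.mkQ (tail q') = Q.mkQ q := congrArg Prod.snd h
      rw [← hg, ← h1, hg, ← h0, dec]
      exact (Submodule.Quotient.mk_eq_zero Q).2 ((hQ _).2 ⟨n, hx⟩)
    · intro h
      obtain ⟨n, hn⟩ := (hQ _).1 ((Submodule.Quotient.mk_eq_zero Q).1 h)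
      refine ⟨⟨_, hn⟩, ?_⟩
      rw [hφ]
      have h1 : tail (Pi.single 0 m + shift q) = q := by
        funext i; simp [tail, shift]
      have h2 : (Pi.single 0 m + shift q : ℕ → M) 0 = m := by simp [shift]
      change ((Pi.single 0 m + shift q : ℕ → M) 0, Q.mkQ (tail (Pi.single 0 m + shift q))) = _
      rw [h1, h2]

end StDeg

/-- Transitivity of stable degeneration. -/
theorem stable_degeneration_trans
    (k : Type u) [Field k] (A : Type u) [Ring A] [Algebra k A] [FiniteDimensional k A]
    (X : Type u) [AddCommGroup X] [Module A X] [Module.Finite A X]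
    (Y : Type u) [AddCommGroup Y] [Module A Y] [Module.Finite A Y]
    (Z : Type u) [AddCommGroup Z] [Module A Z] [Module.Finite A Z]
    (hXY : StDegLE A X Y) (hYZ : StDegLE A Y Z) :
    StDegLE A X Z := by
  have : IsArtinianRing A := IsArtinianRing.of_finite k A
  obtain ⟨P, _, _, Q, _, _, hP, hP', hQ, hQ', h1⟩ := hXY
  obtain ⟨R, _, _, S, _, _, hR, hR', hS, hS', h2⟩ := hYZ
  refine ⟨P × R, inferInstance, inferInstance, S × Q, inferInstance, inferInstance,
    inferInstance, inferInstance, inferInstance, inferInstance, ?_⟩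
  have k1 : DegLE A (X × (P × R)) (Y × (Q × R)) :=
    StDeg.DegLE.prod_congr h1 (LinearEquiv.prodAssoc A X P R) (LinearEquiv.prodAssoc A Y Q R)
  have k2 : DegLE A (Y × (Q × R)) (Z × (S × Q)) :=
    StDeg.DegLE.prod_congr h2
      (LinearEquiv.prodAssoc A Y R Q ≪≫ₗ
        LinearEquiv.prodCongr (LinearEquiv.refl A Y) (LinearEquiv.prodComm A R Q))
      (LinearEquiv.prodAssoc A Z S Q)
  exact ((StDeg.Lat.of_deg k1).trans (StDeg.Lat.of_deg k2)).to_deg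
end

section
/- Antisymmetry of stable degeneration up to stable isomorphism: let X and Y be finitely generated left A-modules over a finite-dimensional k-algebra A. If X ≤_st Y and Y ≤_st X, then X and Y are stably isomorphic, i.e., there exist finitely generated projective A-modules P and Q such that X ⊕ P ≅ Y ⊕ Q as A-modules. -/
universe u

theorem cancel_of_bij {A : Type u} [Ring A] {M N Z : Type u} [AddCommGroup M] [Module A M]
    [AddCommGroup N] [Module A N] [AddCommGroup Z] [Module A Z]
    (φ : (M × Z) ≃ₗ[A] (N × Z))
    (h : Function.Bijective (fun z : Z => (φ (0, z)).2)) : Nonempty (M ≃ₗ[A] N) := by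
  let d : Z →ₗ[A] Z := (LinearMap.snd A N Z).comp (φ.toLinearMap.comp (LinearMap.inr A M Z))
  let c : M →ₗ[A] Z := (LinearMap.snd A N Z).comp (φ.toLinearMap.comp (LinearMap.inl A M Z))
  let e : Z ≃ₗ[A] Z := LinearEquiv.ofBijective d h
  have hcd : ∀ m z, (φ (m, z)).2 = c m + d z := by
    intro m z
    have : (m, z) = (m, (0 : Z)) + ((0 : M), z) := by simp
    rw [this, map_add]; rfl
  let s : M →ₗ[A] M × Z := LinearMap.prod LinearMap.id (-(e.symm.toLinearMap.comp c))
  have hs : ∀ m, s m = (m, - e.symm (c m)) := fun m => rfl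
  have hde : ∀ z, d (e.symm z) = z := fun z => e.apply_symm_apply z
  have hs2 : ∀ m, (φ (s m)).2 = 0 := by
    intro m
    rw [hs, hcd, map_neg, hde, add_neg_cancel]
  refine ⟨LinearEquiv.ofBijective ((LinearMap.fst A N Z).comp (φ.toLinearMap.comp s)) ⟨?_, ?_⟩⟩
  · rw [injective_iff_map_eq_zero]
    intro m hm
    have h1 : φ (s m) = 0 := Prod.ext hm (hs2 m)
    have h2 : s m = 0 := by simpa using h1
    exact congrArg Prod.fst h2
  · intro n
    obtain ⟨⟨m, z⟩, hmz⟩ := φ.surjective (n, 0)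
    refine ⟨m, ?_⟩
    have h1 : c m + d z = 0 := by rw [← hcd, hmz]
    have h2 : s m = (m, z) := by
      rw [hs]
      congr 1
      apply e.injective
      rw [map_neg, e.apply_symm_apply]
      exact (neg_eq_of_add_eq_zero_right h1)
    change (φ (s m)).1 = n
    rw [h2, hmz]

theorem cancel_indec {A : Type u} [Ring A] {M N Z : Type u} [AddCommGroup M] [Module A M]
    [AddCommGroup N] [Module A N] [AddCommGroup Z] [Module A Z]
    (hZ : ∀ f : Module.End A Z, IsUnit f ∨ IsNilpotent f)
    (φ : (M × Z) ≃ₗ[A] (N × Z)) : Nonempty (M ≃ₗ[A] N) := by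
  let d : Module.End A Z := (LinearMap.snd A N Z).comp (φ.toLinearMap.comp (LinearMap.inr A M Z))
  let c : M →ₗ[A] Z := (LinearMap.snd A N Z).comp (φ.toLinearMap.comp (LinearMap.inl A M Z))
  let d' : Module.End A Z :=
    (LinearMap.snd A M Z).comp (φ.symm.toLinearMap.comp (LinearMap.inr A N Z))
  let b' : Z →ₗ[A] M := (LinearMap.fst A M Z).comp (φ.symm.toLinearMap.comp (LinearMap.inr A N Z))
  have hcd : ∀ m z, (φ (m, z)).2 = c m + d z := by
    intro m z
    have : (m, z) = (m, (0 : Z)) + ((0 : M), z) := by simp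
    rw [this, map_add]; rfl
  by_cases hd : IsUnit d
  · exact cancel_of_bij φ ((Module.End.isUnit_iff d).1 hd)
  have hdn : ∀ x : Module.End A Z, ¬ IsUnit (d * x) := by
    intro x hx
    rcases hZ d with h | ⟨n, hn⟩
    · exact hd h
    · have hsurj : Function.Surjective d := by
        intro z
        obtain ⟨y, hy⟩ := ((Module.End.isUnit_iff _).1 hx).2 z
        exact ⟨x y, hy⟩
      have h0 : Function.Surjective (d ^ n : Module.End A Z) := by
        rw [Module.End.coe_pow]; exact hsurj.iterate n
      apply hd
      have hz : ∀ z : Z, z = 0 := by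
        intro z
        obtain ⟨y, rfl⟩ := h0 z
        rw [hn]; rfl
      refine (Module.End.isUnit_iff d).2 ⟨fun x y _ => by rw [hz x, hz y], hsurj⟩
  have hu : IsUnit (c.comp b' : Module.End A Z) := by
    have h1 : (c.comp b' : Module.End A Z) = 1 - d * d' := by
      ext z
      have : (φ (φ.symm (0, z))).2 = z := by simp
      have h2 := hcd (φ.symm (0, z)).1 (φ.symm (0, z)).2
      rw [Prod.mk.eta, this] at h2
      exact eq_sub_of_add_eq h2.symm
    rw [h1]
    exact ((hZ (d * d')).resolve_left (hdn d')).isUnit_one_sub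
  have hu2 : IsUnit (c.comp b' + d : Module.End A Z) := by
    obtain ⟨w, hw⟩ := hu
    rw [← hw]
    have h3 : (w : Module.End A Z) + d = (1 + d * (↑w⁻¹ : Module.End A Z)) * w := by
      rw [add_mul, mul_assoc]; simp
    rw [h3]
    exact (((hZ _).resolve_left (hdn _)).isUnit_one_add).mul w.isUnit
  let sh : (M × Z) ≃ₗ[A] (M × Z) :=
    LinearEquiv.ofLinearMap
      (LinearMap.prod (LinearMap.fst A M Z + b'.comp (LinearMap.snd A M Z)) (LinearMap.snd A M Z))
      (LinearMap.prod (LinearMap.fst A M Z - b'.comp (LinearMap.snd A M Z)) (LinearMap.snd A M Z))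
      (by ext <;> simp) (by ext <;> simp)
  refine cancel_of_bij (sh.trans φ) ?_
  have h4 : (fun z : Z => ((sh.trans φ) (0, z)).2) = (c.comp b' + d : Module.End A Z) := by
    funext z
    change (φ (0 + b' z, z)).2 = _
    rw [hcd, zero_add]; rfl
  rw [h4]
  exact (Module.End.isUnit_iff _).1 hu2

theorem cancel_sub {A : Type u} [Ring A] {Z : Type u} [AddCommGroup Z] [Module A Z]
    [IsArtinian A Z] [IsNoetherian A Z] (W : Submodule A Z) :
    ∀ (M N : Type u) [AddCommGroup M] [Module A M] [AddCommGroup N] [Module A N],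
      ((M × W) ≃ₗ[A] (N × W)) → Nonempty (M ≃ₗ[A] N) := by
  induction W using WellFoundedLT.induction with
  | _ W ih =>
  intro M N _ _ _ _ φ
  by_cases hZ : ∀ f : Module.End A W, IsUnit f ∨ IsNilpotent f
  · exact cancel_indec hZ φ
  push Not at hZ
  obtain ⟨f, hf, hf'⟩ := hZ
  obtain ⟨n, hn⟩ := Filter.eventually_atTop.1 f.eventually_isCompl_ker_pow_range_pow
  have hc := hn (n + 1) (by omega)
  set p := LinearMap.ker (f ^ (n + 1)) with hp
  set q := LinearMap.range (f ^ (n + 1)) with hq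
  have hqb : q ≠ ⊥ := by
    intro h
    exact hf' ⟨n + 1, LinearMap.range_eq_bot.1 h⟩
  have hpb : p ≠ ⊥ := by
    intro h
    apply hf
    have hqt : q = ⊤ := by
      have := hc.sup_eq_top
      rwa [h, bot_sup_eq] at this
    have hb : IsUnit (f ^ (n + 1)) := (Module.End.isUnit_iff _).2
      ⟨LinearMap.ker_eq_bot.1 h, LinearMap.range_eq_top.1 hqt⟩
    exact (isUnit_pow_succ_iff).1 hb
  have hlt : ∀ r : Submodule A W, r ≠ ⊤ → r.map W.subtype < W := by
    intro r hr
    refine lt_of_le_of_ne (Submodule.map_subtype_le W r) ?_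
    intro h
    apply hr
    rw [eq_top_iff]
    intro x _
    have hx : (x : Z) ∈ r.map W.subtype := by rw [h]; exact x.2
    obtain ⟨y, hy, hyx⟩ := hx
    have : y = x := Subtype.ext hyx
    rwa [← this]
  have hpt : p ≠ ⊤ := by
    intro h
    apply hqb
    have := hc.inf_eq_bot
    rwa [h, top_inf_eq] at this
  have hqt : q ≠ ⊤ := by
    intro h
    apply hpb
    have := hc.inf_eq_bot
    rwa [h, inf_top_eq] at this
  let ep := W.equivSubtypeMap p
  let eq := W.equivSubtypeMap q
  let e : W ≃ₗ[A] (p.map W.subtype × q.map W.subtype) :=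
    (Submodule.prodEquivOfIsCompl p q hc).symm.trans (LinearEquiv.prodCongr ep eq)
  let ψ : ((M × p.map W.subtype) × q.map W.subtype) ≃ₗ[A]
      ((N × p.map W.subtype) × q.map W.subtype) :=
    (LinearEquiv.prodAssoc A _ _ _).trans
      ((LinearEquiv.prodCongr (LinearEquiv.refl A M) e.symm).trans
        (φ.trans ((LinearEquiv.prodCongr (LinearEquiv.refl A N) e).trans
          (LinearEquiv.prodAssoc A _ _ _).symm)))
  obtain ⟨ψ'⟩ := ih _ (hlt q hqt) _ _ ψ
  exact ih _ (hlt p hpt) _ _ ψ'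

theorem cancel_fl {A : Type u} [Ring A] {M N Z : Type u} [AddCommGroup M] [Module A M]
    [AddCommGroup N] [Module A N] [AddCommGroup Z] [Module A Z]
    [IsArtinian A Z] [IsNoetherian A Z]
    (φ : (M × Z) ≃ₗ[A] (N × Z)) : Nonempty (M ≃ₗ[A] N) :=
  cancel_sub (⊤ : Submodule A Z) M N
    ((LinearEquiv.prodCongr (LinearEquiv.refl A M) Submodule.topEquiv).trans
      (φ.trans (LinearEquiv.prodCongr (LinearEquiv.refl A N) Submodule.topEquiv.symm)))

section
open CategoryTheory CategoryTheory.Abelian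

variable (k : Type u) [Field k] (A : Type u) [Ring A] [Algebra k A] [FiniteDimensional k A]

/-- dimension of the first Ext group -/
noncomputable def e1 (M U : ModuleCat.{u} A) : ℕ := Module.finrank k (Ext M U 1)

theorem hom_fin (M U : ModuleCat.{u} A) [Module.Finite A M] [Module.Finite A U] :
    Module.Finite k (M ⟶ U) := by
  let := ModuleCat.moduleOfAlgebraModule (k := k) M
  let := ModuleCat.moduleOfAlgebraModule (k := k) U
  have := ModuleCat.isScalarTower_of_algebra_moduleCat (k := k) M
  have := ModuleCat.isScalarTower_of_algebra_moduleCat (k := k) U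
  have : Module.Finite k M := Module.Finite.trans A M
  have : Module.Finite k U := Module.Finite.trans A U
  let L : (M ⟶ U) →ₗ[k] (M →ₗ[k] U) :=
    { toFun := fun f => f.hom.restrictScalars k
      map_add' := fun f g => rfl
      map_smul' := fun r f => rfl }
  refine Module.Finite.of_injective L ?_
  intro f g h
  ext x
  exact LinearMap.congr_fun h x

theorem ext_fin (M U : ModuleCat.{u} A) [Module.Finite A M] [Module.Finite A U] :
    Module.Finite k (Ext M U 1) := by
  have : IsNoetherianRing A := isNoetherian_of_tower k inferInstance
  obtain ⟨n, f, hf⟩ := Module.Finite.exists_fin' A M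
  let S : ShortComplex (ModuleCat.{u} A) :=
    ShortComplex.mk (ModuleCat.ofHom (LinearMap.ker f).subtype) (ModuleCat.ofHom f) (by
      ext x; exact x.2)
  have hS : S.ShortExact := by
    refine ModuleCat.shortComplex_shortExact S ?_ ?_ ?_
    · intro x
      constructor
      · intro h; exact ⟨⟨x, h⟩, rfl⟩
      · rintro ⟨y, rfl⟩; exact y.2
    · exact Subtype.val_injective
    · exact hf
  have : Module.Finite A S.X₁ := inferInstanceAs (Module.Finite A (LinearMap.ker f))
  have := hom_fin k A S.X₁ U
  have : Module.Finite k (Ext S.X₁ U 0) :=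
    Module.Finite.equiv (Ext.linearEquiv₀ (R := k)).symm
  have : Projective S.X₂ := 
    (IsProjective.iff_projective (R := A) (Fin n → A)).1 inferInstance
  refine Module.Finite.of_surjective (Ext.precompOfLinear hS.extClass k U (add_zero 1)) ?_
  intro x
  obtain ⟨y, hy⟩ := Ext.contravariant_sequence_exact₃ hS U x
    (Ext.eq_zero_of_projective _) (add_zero 1)
  exact ⟨y, hy⟩

theorem e1_prod (M N : Type u) [AddCommGroup M] [Module A M] [AddCommGroup N] [Module A N]
    (U : ModuleCat.{u} A) [Module.Finite A M] [Module.Finite A N] [Module.Finite A U] :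
    e1 k A (ModuleCat.of A (M × N)) U = e1 k A (ModuleCat.of A M) U + e1 k A (ModuleCat.of A N) U := by
  have := ext_fin k A (ModuleCat.of A M) U
  have := ext_fin k A (ModuleCat.of A N) U
  unfold e1
  rw [← Module.finrank_prod]
  let i1 : ModuleCat.of A M ⟶ ModuleCat.of A (M × N) := ModuleCat.ofHom (LinearMap.inl A M N)
  let i2 : ModuleCat.of A N ⟶ ModuleCat.of A (M × N) := ModuleCat.ofHom (LinearMap.inr A M N)
  let p1 : ModuleCat.of A (M × N) ⟶ ModuleCat.of A M := ModuleCat.ofHom (LinearMap.fst A M N)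
  let p2 : ModuleCat.of A (M × N) ⟶ ModuleCat.of A N := ModuleCat.ofHom (LinearMap.snd A M N)
  have h11 : i1 ≫ p1 = 𝟙 _ := rfl
  have h22 : i2 ≫ p2 = 𝟙 _ := rfl
  have h12 : i1 ≫ p2 = 0 := rfl
  have h21 : i2 ≫ p1 = 0 := rfl
  have hid : p1 ≫ i1 + p2 ≫ i2 = 𝟙 _ := by
    refine ModuleCat.hom_ext (LinearMap.ext fun (x : M × N) => ?_)
    change ((x.1, 0) : M × N) + (0, x.2) = x
    simp
  let P {B C : ModuleCat.{u} A} (f : B ⟶ C) : Ext C U 1 →ₗ[k] Ext B U 1 :=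
    Ext.precompOfLinear (Ext.mk₀ f) k U (zero_add 1)
  have hP {B C : ModuleCat.{u} A} (f : B ⟶ C) (x) : P f x = (Ext.mk₀ f).comp x (zero_add 1) := rfl
  refine LinearEquiv.finrank_eq (LinearEquiv.ofLinearMap
    (LinearMap.prod (P i1) (P i2)) (LinearMap.coprod (P p1) (P p2)) ?_ ?_)
  · refine LinearMap.ext fun x => ?_
    simp [hP, h11, h22, h12, h21]
  · refine LinearMap.ext fun x => ?_
    change (Ext.mk₀ p1).comp ((Ext.mk₀ i1).comp x (zero_add 1)) (zero_add 1) +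
      (Ext.mk₀ p2).comp ((Ext.mk₀ i2).comp x (zero_add 1)) (zero_add 1) = x
    rw [Ext.mk₀_comp_mk₀_assoc, Ext.mk₀_comp_mk₀_assoc, ← Ext.add_comp, ← Ext.mk₀_add, hid,
      Ext.mk₀_id_comp]

theorem e1_proj (P : Type u) [AddCommGroup P] [Module A P] [Module.Projective A P]
    (U : ModuleCat.{u} A) : e1 k A (ModuleCat.of A P) U = 0 := by
  have : Projective (ModuleCat.of A P) := (IsProjective.iff_projective (R := A) P).1 inferInstance
  have : Subsingleton (Ext (ModuleCat.of A P) U 1) :=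
    ⟨fun x y => by rw [Ext.eq_zero_of_projective x, Ext.eq_zero_of_projective y]⟩
  exact Module.finrank_zero_of_subsingleton

theorem e1_ses (S : ShortComplex (ModuleCat.{u} A)) (hS : S.ShortExact)
    [Module.Finite A S.X₁] [Module.Finite A S.X₂] [Module.Finite A S.X₃]
    (U : ModuleCat.{u} A) [Module.Finite A U] :
    e1 k A S.X₂ U ≤ e1 k A S.X₁ U + e1 k A S.X₃ U ∧
    (e1 k A S.X₂ U = e1 k A S.X₁ U + e1 k A S.X₃ U →
      ∀ x : Ext S.X₃ U 1, (Ext.mk₀ S.g).comp x (zero_add 1) = 0 → x = 0) := by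
  have := ext_fin k A S.X₁ U
  have := ext_fin k A S.X₂ U
  have := ext_fin k A S.X₃ U
  let α : Ext S.X₃ U 1 →ₗ[k] Ext S.X₂ U 1 := Ext.precompOfLinear (Ext.mk₀ S.g) k U (zero_add 1)
  let β : Ext S.X₂ U 1 →ₗ[k] Ext S.X₁ U 1 := Ext.precompOfLinear (Ext.mk₀ S.f) k U (zero_add 1)
  have hle : LinearMap.ker β ≤ LinearMap.range α := by
    intro x hx
    obtain ⟨y, hy⟩ := Ext.contravariant_sequence_exact₂ hS U x hx
    exact ⟨y, hy⟩
  have h1 := Submodule.finrank_mono hle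
  have h2 := LinearMap.finrank_range_add_finrank_ker α
  have h3 := LinearMap.finrank_range_add_finrank_ker β
  have h4 := Submodule.finrank_le (LinearMap.range β)
  unfold e1
  refine ⟨by omega, fun h x hx => ?_⟩
  have h5 : Module.finrank k (LinearMap.ker α) = 0 := by omega
  have h6 : LinearMap.ker α = ⊥ := Submodule.finrank_eq_zero.1 h5
  have : x ∈ LinearMap.ker α := hx
  rw [h6] at this
  simpa using this

theorem ses_main (N E Z : Type u) [AddCommGroup N] [Module A N] [AddCommGroup E] [Module A E]
    [AddCommGroup Z] [Module A Z] [Module.Finite A N] [Module.Finite A E] [Module.Finite A Z]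
    (f : N →ₗ[A] E) (g : E →ₗ[A] Z) (hf : Function.Injective f) (hg : Function.Surjective g)
    (h : LinearMap.range f = LinearMap.ker g) :
    (∀ U : ModuleCat.{u} A, Module.Finite A U → e1 k A (ModuleCat.of A E) U ≤
      e1 k A (ModuleCat.of A N) U + e1 k A (ModuleCat.of A Z) U) ∧
    (e1 k A (ModuleCat.of A E) (ModuleCat.of A N) =
      e1 k A (ModuleCat.of A N) (ModuleCat.of A N) + e1 k A (ModuleCat.of A Z) (ModuleCat.of A N) →
      Nonempty (E ≃ₗ[A] (N × Z))) := by
  have hex : Function.Exact f g := LinearMap.exact_iff.2 h.symm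
  let S : ShortComplex (ModuleCat.{u} A) :=
    ShortComplex.mk (ModuleCat.ofHom f) (ModuleCat.ofHom g) (by
      ext x; exact hex.apply_apply_eq_zero x)
  have hS : S.ShortExact := ModuleCat.shortComplex_shortExact S hex hf hg
  have : Module.Finite A S.X₁ := inferInstanceAs (Module.Finite A N)
  have : Module.Finite A S.X₂ := inferInstanceAs (Module.Finite A E)
  have : Module.Finite A S.X₃ := inferInstanceAs (Module.Finite A Z)
  refine ⟨fun U _ => (e1_ses k A S hS U).1, fun he => ?_⟩
  have h0 : hS.extClass = 0 := (e1_ses k A S hS S.X₁).2 he _ hS.comp_extClass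
  obtain ⟨r, hr⟩ := Ext.contravariant_sequence_exact₁ hS S.X₁ (Ext.mk₀ (𝟙 S.X₁)) (add_zero 1)
    (by rw [h0, Ext.zero_comp])
  obtain ⟨r, rfl⟩ := (Ext.mk₀_bijective _ _).2 r
  rw [Ext.mk₀_comp_mk₀] at hr
  have hr' := (Ext.mk₀_bijective _ _).1 hr
  have hl : r.hom.comp f = LinearMap.id := congrArg ModuleCat.Hom.hom hr'
  exact ⟨(hex.splitInjectiveEquiv hg ⟨r.hom, hl⟩).1⟩
end

/-- Antisymmetry of stable degeneration up to stable isomorphism. -/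
theorem stable_degeneration_antisymm
    (k : Type u) [Field k] (A : Type u) [Ring A] [Algebra k A] [FiniteDimensional k A]
    (X : Type u) [AddCommGroup X] [Module A X] [Module.Finite A X]
    (Y : Type u) [AddCommGroup Y] [Module A Y] [Module.Finite A Y]
    (hXY : StDegLE A X Y) (hYX : StDegLE A Y X) :
    ∃ (P : Type u) (_ : AddCommGroup P) (_ : Module A P)
      (Q : Type u) (_ : AddCommGroup Q) (_ : Module A Q),
      Module.Finite A P ∧ Module.Projective A P ∧
      Module.Finite A Q ∧ Module.Projective A Q ∧
      Nonempty ((X × P) ≃ₗ[A] (Y × Q)) := by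
  obtain ⟨P, _, _, Q, _, _, hP1, hP2, hQ1, hQ2, Z, _, _, hZ, f, g, hf, hg, h⟩ := hXY
  obtain ⟨P', _, _, Q', _, _, hP1', hP2', hQ1', hQ2', Z', _, _, hZ', f', g', hf', hg', h'⟩ := hYX
  have : IsArtinianRing A := IsArtinianRing.of_finite k A
  have : IsNoetherianRing A := isNoetherian_of_tower k inferInstance
  obtain ⟨-, H2⟩ := ses_main k A _ _ _ f g hf hg h
  have H1 := (ses_main k A _ _ _ f g hf hg h).1 (ModuleCat.of A (Y × Q))
    (inferInstanceAs (Module.Finite A (Y × Q)))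
  have H1' := (ses_main k A _ _ _ f' g' hf' hg' h').1 (ModuleCat.of A (Y × Q))
    (inferInstanceAs (Module.Finite A (Y × Q)))
  have hfin : Module.Finite A (ModuleCat.of A (Y × Q)) :=
    inferInstanceAs (Module.Finite A (Y × Q))
  have a1 := e1_prod k A (X × P) Z (ModuleCat.of A (Y × Q))
  have a2 := e1_prod k A X P (ModuleCat.of A (Y × Q))
  have a3 := e1_prod k A Y Q (ModuleCat.of A (Y × Q))
  have a4 := e1_prod k A (Y × P') Z' (ModuleCat.of A (Y × Q))
  have a5 := e1_prod k A Y P' (ModuleCat.of A (Y × Q))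
  have a6 := e1_prod k A X Q' (ModuleCat.of A (Y × Q))
  have b1 := e1_proj k A P (ModuleCat.of A (Y × Q))
  have b2 := e1_proj k A Q (ModuleCat.of A (Y × Q))
  have b3 := e1_proj k A P' (ModuleCat.of A (Y × Q))
  have b4 := e1_proj k A Q' (ModuleCat.of A (Y × Q))
  obtain ⟨e⟩ := H2 (by omega)
  exact ⟨P, _, _, Q, _, _, hP1, hP2, hQ1, hQ2, cancel_fl e⟩
end

section
/- Cancellation of projectives under degeneration: let X be a finitely generated left A-module over a finite-dimensional k-algebra A, and let P and Q be finitely generated projective A-modules. If X ⊕ P ≤_deg X ⊕ Q, then P ≅ Q as A-modules. -/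
universe u

namespace ProjCancel

section
variable (k : Type*) [Field k] {A : Type*} [Ring A] [Algebra k A]

/-- Precomposition, as a `k`-linear map on spaces of `A`-linear maps. -/
def precomp {M N : Type*} (Y : Type*) [AddCommGroup M] [Module A M]
    [AddCommGroup N] [Module A N] [AddCommGroup Y] [Module A Y]
    [Module k Y] [SMulCommClass A k Y] (f : M →ₗ[A] N) :
    (N →ₗ[A] Y) →ₗ[k] (M →ₗ[A] Y) where
  toFun g := g.comp f
  map_add' _ _ := rfl
  map_smul' _ _ := rfl

theorem finite_hom (M Y : Type*) [AddCommGroup M] [Module A M] [Module k M] [IsScalarTower k A M]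
    [AddCommGroup Y] [Module A Y] [Module k Y] [IsScalarTower k A Y]
    [Module.Finite k M] [Module.Finite k Y] : Module.Finite k (M →ₗ[A] Y) := by
  let φ : (M →ₗ[A] Y) →ₗ[k] (M →ₗ[k] Y) :=
    { toFun := fun g => g.restrictScalars k
      map_add' := fun _ _ => rfl
      map_smul' := fun _ _ => rfl }
  exact Module.Finite.of_injective φ (LinearMap.restrictScalars_injective k)

theorem finrank_hom_prod (M Z Y : Type*)
    [AddCommGroup M] [Module A M] [Module k M] [IsScalarTower k A M] [Module.Finite k M]
    [AddCommGroup Z] [Module A Z] [Module k Z] [IsScalarTower k A Z] [Module.Finite k Z]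
    [AddCommGroup Y] [Module A Y] [Module k Y] [IsScalarTower k A Y] [Module.Finite k Y] :
    Module.finrank k (M →ₗ[A] Y) + Module.finrank k (Z →ₗ[A] Y) =
      Module.finrank k (M × Z →ₗ[A] Y) := by
  have := finite_hom k (A := A) M Y
  have := finite_hom k (A := A) Z Y
  have e := (LinearMap.coprodEquiv k (R := A) (M := M) (M₂ := Z) (M₃ := Y)).finrank_eq
  rwa [Module.finrank_prod] at e

theorem finrank_hom_le {M N Z Y : Type*}
    [AddCommGroup M] [Module A M] [Module k M] [IsScalarTower k A M] [Module.Finite k M]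
    [AddCommGroup N] [Module A N] [Module k N] [IsScalarTower k A N] [Module.Finite k N]
    [AddCommGroup Z] [Module A Z] [Module k Z] [IsScalarTower k A Z] [Module.Finite k Z]
    [AddCommGroup Y] [Module A Y] [Module k Y] [IsScalarTower k A Y] [Module.Finite k Y]
    (f : N →ₗ[A] M × Z) (g : M × Z →ₗ[A] Z) (hg : Function.Surjective g)
    (hfg : LinearMap.range f = LinearMap.ker g) :
    Module.finrank k (M →ₗ[A] Y) ≤ Module.finrank k (N →ₗ[A] Y) := by
  have := finite_hom k (A := A) M Y
  have := finite_hom k (A := A) N Y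
  have := finite_hom k (A := A) Z Y
  have := finite_hom k (A := A) (M × Z) Y
  have e := (LinearMap.coprodEquiv k (R := A) (M := M) (M₂ := Z) (M₃ := Y)).finrank_eq
  rw [Module.finrank_prod] at e
  have h1 := LinearMap.finrank_range_add_finrank_ker (precomp k Y f)
  have h2 : LinearMap.ker (precomp k Y f) ≤ LinearMap.range (precomp k Y g) := by
    intro φ hφ
    have hker : LinearMap.ker g ≤ LinearMap.ker φ := by
      rw [← hfg]
      rintro _ ⟨x, rfl⟩
      exact LinearMap.congr_fun (LinearMap.mem_ker.1 hφ) x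
    refine ⟨((LinearMap.ker g).liftQ φ hker).comp
      (g.quotKerEquivOfSurjective hg).symm.toLinearMap, ?_⟩
    ext1 <;> ext x <;> simp [precomp]
  have h3 := Submodule.finrank_mono h2
  have h4 := LinearMap.finrank_range_le (precomp k Y g)
  have h5 := Submodule.finrank_le (LinearMap.range (precomp k Y f))
  omega

theorem exists_surj {P Q T : Type*}
    [AddCommGroup P] [Module A P] [Module k P] [IsScalarTower k A P] [Module.Finite k P]
    [AddCommGroup Q] [Module A Q] [Module k Q] [IsScalarTower k A Q] [Module.Finite k Q]
    [AddCommGroup T] [Module A T] [Module k T] [IsScalarTower k A T] [Module.Finite k T]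
    [IsSemisimpleModule A T] (p : P →ₗ[A] T) (hp : Function.Surjective p)
    (H : ∀ C : Submodule A T,
      Module.finrank k (P →ₗ[A] C) ≤ Module.finrank k (Q →ₗ[A] C)) :
    ∃ f : Q →ₗ[A] T, Function.Surjective f := by
  have : IsArtinian A Q := isArtinian_of_tower k inferInstance
  obtain ⟨K, ⟨f, rfl⟩, hmax⟩ := WellFounded.has_min
    (r := ((· < ·) : Submodule A Q → Submodule A Q → Prop)) wellFounded_lt
    (Set.range fun f : Q →ₗ[A] T => LinearMap.ker f) ⟨_, 0, rfl⟩
  refine ⟨f, ?_⟩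
  by_contra hf
  obtain ⟨C, hC⟩ := exists_isCompl (LinearMap.range f)
  have hfC : Module.Finite k C := 
    inferInstanceAs (Module.Finite k (C.restrictScalars k))
  have hfI : Module.Finite k (LinearMap.range f) := 
    inferInstanceAs (Module.Finite k ((LinearMap.range f).restrictScalars k))
  have := finite_hom k (A := A) P C
  have := finite_hom k (A := A) Q C
  have := finite_hom k (A := A) T C
  have := finite_hom k (A := A) C C
  have := finite_hom k (A := A) (LinearMap.range f) C
  have e := (LinearMap.coprodEquiv k (R := A) (M := LinearMap.range f) (M₂ := C)
    (M₃ := C)).finrank_eq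
  rw [Module.finrank_prod] at e
  have h1 : Module.finrank k (((LinearMap.range f) × C) →ₗ[A] C) ≤
      Module.finrank k (P →ₗ[A] C) := by
    have := finite_hom k (A := A) ((LinearMap.range f) × C) C
    let q := (Submodule.prodEquivOfIsCompl _ _ hC).symm.toLinearMap.comp p
    have hq : Function.Surjective q :=
      (Submodule.prodEquivOfIsCompl _ _ hC).symm.surjective.comp hp
    refine LinearMap.finrank_le_finrank_of_injective (f := precomp k C q) ?_
    intro a b hab
    exact (LinearMap.cancel_right hq).1 hab
  have hCne : C ≠ ⊥ := by
    rintro rfl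
    exact hf (LinearMap.range_eq_top.1 (by simpa using hC.sup_eq_top))
  have : Nontrivial C := (Submodule.nontrivial_iff_ne_bot).2 hCne
  have h2 : 0 < Module.finrank k (C →ₗ[A] C) := by
    rw [Module.finrank_pos_iff]
    exact ⟨⟨LinearMap.id, 0, one_ne_zero (α := Module.End A C)⟩⟩
  have h3 : ∃ g : Q →ₗ[A] C, ∃ x, f x = 0 ∧ g x ≠ 0 := by
    by_contra! hcon
    have h4 : LinearMap.range (precomp k C f.rangeRestrict) = ⊤ := by
      rw [eq_top_iff]
      intro g _
      have hker : LinearMap.ker f ≤ LinearMap.ker g := fun x hx => hcon g x hx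
      refine ⟨((LinearMap.ker f).liftQ g hker).comp f.quotKerEquivRange.symm.toLinearMap, ?_⟩
      ext x
      have : f.quotKerEquivRange.symm (f.rangeRestrict x) = Submodule.Quotient.mk x := by
        rw [LinearEquiv.symm_apply_eq]; rfl
      simp [precomp, this]
    have h5 := LinearMap.finrank_range_le (precomp k C f.rangeRestrict)
    rw [h4, finrank_top] at h5
    have := H C
    omega
  obtain ⟨g, x, hx, hgx⟩ := h3
  let F : Q →ₗ[A] T := f + C.subtype.comp g
  have hF : ∀ y, F y = 0 → f y = 0 ∧ g y = 0 := by
    intro y hy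
    have hy' : f y + (g y : T) = 0 := hy
    have h6 : f y ∈ C := by
      rw [eq_neg_of_add_eq_zero_left hy']
      exact C.neg_mem (g y).2
    have h7 : f y = 0 := Submodule.disjoint_def.1 hC.disjoint _ ⟨y, rfl⟩ h6
    refine ⟨h7, Subtype.ext ?_⟩
    simpa [h7] using hy'
  refine hmax (LinearMap.ker F) ⟨F, rfl⟩ (SetLike.lt_iff_le_and_exists.2 ⟨?_, x, hx, ?_⟩)
  · exact fun y hy => (hF y hy).1
  · exact fun hxF => hgx (hF x hxF).2

end

end ProjCancel

/-- Cancellation of projectives under degeneration. -/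
theorem projective_cancellation_of_deg
    (k : Type u) [Field k] (A : Type u) [Ring A] [Algebra k A] [FiniteDimensional k A]
    (X : Type u) [AddCommGroup X] [Module A X] [Module.Finite A X]
    (P : Type u) [AddCommGroup P] [Module A P] [Module.Finite A P] [Module.Projective A P]
    (Q : Type u) [AddCommGroup Q] [Module A Q] [Module.Finite A Q] [Module.Projective A Q]
    (h : DegLE A (X × P) (X × Q)) :
    Nonempty (P ≃ₗ[A] Q) := by
  obtain ⟨Z, _, _, hZ, f, g, hf, hg, hfg⟩ := h
  let _ := Module.compHom X (algebraMap k A)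
  let _ := Module.compHom P (algebraMap k A)
  let _ := Module.compHom Q (algebraMap k A)
  let _ := Module.compHom Z (algebraMap k A)
  have : IsScalarTower k A X := IsScalarTower.of_algebraMap_smul fun _ _ => rfl
  have : IsScalarTower k A P := IsScalarTower.of_algebraMap_smul fun _ _ => rfl
  have : IsScalarTower k A Q := IsScalarTower.of_algebraMap_smul fun _ _ => rfl
  have : IsScalarTower k A Z := IsScalarTower.of_algebraMap_smul fun _ _ => rfl
  have : Module.Finite k X := Module.Finite.trans A X
  have : Module.Finite k P := Module.Finite.trans A P
  have : Module.Finite k Q := Module.Finite.trans A Q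
  have : Module.Finite k Z := Module.Finite.trans A Z
  -- dimensions agree
  have hdim : Module.finrank k Q = Module.finrank k P := by
    have h1 := LinearMap.finrank_range_add_finrank_ker (g.restrictScalars k)
    have h2 : LinearMap.range (g.restrictScalars k) = ⊤ := LinearMap.range_eq_top.2 hg
    have h3 : LinearMap.ker (g.restrictScalars k) = LinearMap.range (f.restrictScalars k) := by
      ext y
      have := SetLike.ext_iff.1 hfg y
      simpa using this.symm
    have h4 := LinearMap.finrank_range_of_inj (f := f.restrictScalars k) hf
    rw [h2, h3, h4, finrank_top] at h1
    simp only [Module.finrank_prod] at h1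
    omega
  -- Hom-dimension inequality
  have H : ∀ (C : Submodule A (P ⧸ Module.jacobson A P)),
      Module.finrank k (P →ₗ[A] C) ≤ Module.finrank k (Q →ₗ[A] C) := by
    intro C
    have : Module.Finite k C := inferInstanceAs (Module.Finite k (C.restrictScalars k))
    have h1 := ProjCancel.finrank_hom_le k (Y := C) f g hg hfg
    have e1 := ProjCancel.finrank_hom_prod k (A := A) X P C
    have e2 := ProjCancel.finrank_hom_prod k (A := A) X Q C
    omega
  have : IsArtinian A P := isArtinian_of_tower k inferInstance
  have : IsSemisimpleModule A (P ⧸ Module.jacobson A P) :=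
    (IsArtinian.isSemisimpleModule_iff_jacobson A _).2 (Module.jacobson_quotient_jacobson A P)
  obtain ⟨t, ht⟩ := ProjCancel.exists_surj k (Module.jacobson A P).mkQ
    (Submodule.mkQ_surjective _) H
  obtain ⟨s, hs⟩ := Module.projective_lifting_property (Module.jacobson A P).mkQ t
    (Submodule.mkQ_surjective _)
  have hsurj : Function.Surjective s := by
    rw [← LinearMap.range_eq_top]
    by_contra hne
    obtain ⟨m, hm, hle⟩ := (eq_top_or_exists_le_coatom (LinearMap.range s)).resolve_left hne
    have hJ : Module.jacobson A P ≤ m := sInf_le hm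
    apply hm.1
    rw [eq_top_iff]
    intro y _
    obtain ⟨z, hz⟩ := ht ((Module.jacobson A P).mkQ y)
    rw [← hs] at hz
    have h1 : s z - y ∈ Module.jacobson A P := (Submodule.Quotient.eq _).1 hz
    have h2 := m.sub_mem (hle ⟨z, rfl⟩) (hJ h1)
    simpa using h2
  have hinj : Function.Injective s :=
    (LinearMap.injective_iff_surjective_of_finrank_eq_finrank (f := s.restrictScalars k) hdim).2
      hsurj
  exact ⟨(LinearEquiv.ofBijective s ⟨hinj, hsurj⟩).symm⟩
end

section
/- Stable degeneration equals the triangle relation in the stable module category, in concrete form: let X and Y be finitely generated left A-modules over a finite-dimensional k-algebra A. Then X ≤_st Y if and only if there exist a finitely generated A-module Z and finitely generated projective A-modules P, Q, R together with a short exact sequence of A-modules 0 → Y ⊕ P → X ⊕ Z ⊕ Q → Z ⊕ R → 0. -/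
universe u

/-- Stable degeneration equals the triangle relation in the stable module category,
in concrete form. -/
theorem stDegLE_iff_exists_ses
    (k : Type u) [Field k] (A : Type u) [Ring A] [Algebra k A] [FiniteDimensional k A]
    (X : Type u) [AddCommGroup X] [Module A X] [Module.Finite A X]
    (Y : Type u) [AddCommGroup Y] [Module A Y] [Module.Finite A Y] :
    StDegLE A X Y ↔
      ∃ (Z : Type u) (_ : AddCommGroup Z) (_ : Module A Z)
        (P : Type u) (_ : AddCommGroup P) (_ : Module A P)
        (Q : Type u) (_ : AddCommGroup Q) (_ : Module A Q)
        (R : Type u) (_ : AddCommGroup R) (_ : Module A R),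
        Module.Finite A Z ∧
        Module.Finite A P ∧ Module.Projective A P ∧
        Module.Finite A Q ∧ Module.Projective A Q ∧
        Module.Finite A R ∧ Module.Projective A R ∧
        ∃ (f : (Y × P) →ₗ[A] (X × Z × Q)) (g : (X × Z × Q) →ₗ[A] (Z × R)),
          Function.Injective f ∧ Function.Surjective g ∧
          LinearMap.range f = LinearMap.ker g := by
  constructor
  · rintro ⟨P, _, _, Q, _, _, hP, hP', hQ, hQ', Z, _, _, hZ, f, g, hf, hg, hfg⟩
    let e : ((X × P) × Z) ≃ₗ[A] (X × Z × P) :=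
      { toFun := fun t => (t.1.1, t.2, t.1.2)
        invFun := fun t => ((t.1, t.2.2), t.2.1)
        map_add' := fun _ _ => rfl
        map_smul' := fun _ _ => rfl
        left_inv := fun _ => rfl
        right_inv := fun _ => rfl }
    refine ⟨Z, _, _, Q, _, _, P, _, _, PUnit.{u + 1}, inferInstance, inferInstance, hZ, hQ, hQ',
      hP, hP', inferInstance, inferInstance, e.toLinearMap ∘ₗ f,
      (g ∘ₗ e.symm.toLinearMap).prod 0, ?_, ?_, ?_⟩
    · exact e.injective.comp hf
    · rintro ⟨z, r⟩
      obtain ⟨t, ht⟩ := hg z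
      refine ⟨e t, ?_⟩
      ext
      · simpa using ht
    · ext t
      have h : e.symm t ∈ LinearMap.range f ↔ e.symm t ∈ LinearMap.ker g := by rw [hfg]
      simp only [LinearMap.mem_range, LinearMap.mem_ker] at h
      have h1 : (∃ y, e (f y) = t) ↔ ∃ y, f y = e.symm t := by
        simp only [LinearEquiv.eq_symm_apply]
      simp only [LinearMap.mem_range, LinearMap.mem_ker, LinearMap.comp_apply,
        LinearEquiv.coe_coe, LinearMap.prod_apply, h1, h]
      exact ⟨fun h => Prod.ext h rfl, fun h => congrArg Prod.fst h⟩
  · rintro ⟨Z, _, _, P, _, _, Q, _, _, R, _, _, hZ, hP, hP', hQ, hQ', hR, hR', f, g, hf, hg, hfg⟩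
    have hfg' : ∀ t, (∃ y, f y = t) ↔ g t = 0 := fun t => by
      rw [← LinearMap.mem_ker, ← hfg, LinearMap.mem_range]
    let F : (Y × (P × R)) →ₗ[A] (X × Q) × (Z × R) :=
      { toFun := fun t => (((f (t.1, t.2.1)).1, (f (t.1, t.2.1)).2.2),
          ((f (t.1, t.2.1)).2.1, t.2.2))
        map_add' := fun a b => by
          have : f ((a + b).1, (a + b).2.1) = f (a.1, a.2.1) + f (b.1, b.2.1) := by
            rw [← map_add]; rfl
          rw [this]; rfl
        map_smul' := fun c a => by
          have : f ((c • a).1, (c • a).2.1) = c • f (a.1, a.2.1) := by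
            rw [← map_smul]; rfl
          rw [this]; rfl }
    let e : ((X × Q) × (Z × R)) →ₗ[A] (X × Z × Q) :=
      { toFun := fun t => (t.1.1, t.2.1, t.1.2)
        map_add' := fun _ _ => rfl
        map_smul' := fun _ _ => rfl }
    refine ⟨Q, _, _, P × R, inferInstance, inferInstance, hQ, hQ', inferInstance, inferInstance,
      Z × R, inferInstance, inferInstance, inferInstance, F, g ∘ₗ e, ?_, ?_, ?_⟩
    · rintro ⟨y, p, r⟩ ⟨y', p', r'⟩ h
      have hr : r = r' := congrArg (fun t => t.2.2) h
      have h1 : f (y, p) = f (y', p') := congrArg e h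
      have h2 := hf h1
      rw [Prod.mk.injEq] at h2
      rw [h2.1, h2.2, hr]
    · intro w
      obtain ⟨⟨x, z, q⟩, ht⟩ := hg w
      exact ⟨((x, q), (z, 0)), ht⟩
    · ext ⟨⟨x, q⟩, z, r⟩
      rw [LinearMap.mem_ker, LinearMap.mem_range]
      refine Iff.trans ?_ (hfg' (x, z, q))
      constructor
      · rintro ⟨⟨y, p, r'⟩, h⟩
        exact ⟨(y, p), congrArg e h⟩
      · rintro ⟨⟨y, p⟩, h⟩
        refine ⟨(y, p, r), ?_⟩
        change (((f (y, p)).1, (f (y, p)).2.2), ((f (y, p)).2.1, r)) = _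
        rw [h]
end

section
/- Syzygies preserve stable degeneration: let A be a finite-dimensional k-algebra and let X, Y be finitely generated left A-modules with X ≤_st Y. Suppose 0 → X' → P → X → 0 and 0 → Y' → Q → Y → 0 are short exact sequences of A-modules with P and Q finitely generated projective (so X' and Y' are syzygies of X and Y). Then X' ≤_st Y'. -/
universe u

/-- The lemma of Schanuel. -/
theorem schanuel_aux {A : Type u} [Ring A] {S₁ S₂ B : Type u}
    [AddCommGroup S₁] [Module A S₁] [Module.Projective A S₁]
    [AddCommGroup S₂] [Module A S₂] [Module.Projective A S₂]
    [AddCommGroup B] [Module A B]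
    (p : S₁ →ₗ[A] B) (q : S₂ →ₗ[A] B)
    (hp : Function.Surjective p) (hq : Function.Surjective q) :
    Nonempty ((LinearMap.ker p × S₂) ≃ₗ[A] (LinearMap.ker q × S₁)) := by
  obtain ⟨σ, hσ⟩ := Module.projective_lifting_property p q hp
  obtain ⟨τ, hτ⟩ := Module.projective_lifting_property q p hq
  have hσ' : ∀ x, p (σ x) = q x := fun x => LinearMap.congr_fun hσ x
  have hτ' : ∀ x, q (τ x) = p x := fun x => LinearMap.congr_fun hτ x
  let u : (LinearMap.ker p × S₂) →ₗ[A] S₁ :=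
    LinearMap.coprod (LinearMap.ker p).subtype σ
  let v : (LinearMap.ker q × S₁) →ₗ[A] S₂ :=
    LinearMap.coprod (LinearMap.ker q).subtype τ
  let a : (LinearMap.ker p × S₂) →ₗ[A] LinearMap.ker q :=
    LinearMap.codRestrict _ (LinearMap.snd A _ _ - τ ∘ₗ u) (by
      rintro ⟨⟨x, hx⟩, y⟩
      have hx' : p x = 0 := hx
      simp [u, hσ', hτ', hx'])
  let b : (LinearMap.ker q × S₁) →ₗ[A] LinearMap.ker p :=
    LinearMap.codRestrict _ (LinearMap.snd A _ _ - σ ∘ₗ v) (by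
      rintro ⟨⟨x, hx⟩, y⟩
      have hx' : q x = 0 := hx
      simp [v, hσ', hτ', hx'])
  refine ⟨LinearEquiv.ofLinearMap (a.prod u) (b.prod v) ?_ ?_⟩
  · refine LinearMap.ext ?_
    rintro ⟨⟨x, hx⟩, y⟩
    refine Prod.ext (Subtype.ext ?_) ?_ <;> simp [a, b, u, v]
  · refine LinearMap.ext ?_
    rintro ⟨⟨x, hx⟩, y⟩
    refine Prod.ext (Subtype.ext ?_) ?_ <;> simp [a, b, u, v]

/-- Syzygies preserve stable degeneration. -/
theorem syzygy_preserves_stable_degeneration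
    (k : Type u) [Field k] (A : Type u) [Ring A] [Algebra k A] [FiniteDimensional k A]
    (X : Type u) [AddCommGroup X] [Module A X] [Module.Finite A X]
    (Y : Type u) [AddCommGroup Y] [Module A Y] [Module.Finite A Y]
    (X' : Type u) [AddCommGroup X'] [Module A X'] [Module.Finite A X']
    (Y' : Type u) [AddCommGroup Y'] [Module A Y'] [Module.Finite A Y']
    (P : Type u) [AddCommGroup P] [Module A P] [Module.Finite A P] [Module.Projective A P]
    (Q : Type u) [AddCommGroup Q] [Module A Q] [Module.Finite A Q] [Module.Projective A Q]
    (hXY : StDegLE A X Y)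
    (fX : X' →ₗ[A] P) (gX : P →ₗ[A] X)
    (hfX : Function.Injective fX) (hgX : Function.Surjective gX)
    (hX : LinearMap.range fX = LinearMap.ker gX)
    (fY : Y' →ₗ[A] Q) (gY : Q →ₗ[A] Y)
    (hfY : Function.Injective fY) (hgY : Function.Surjective gY)
    (hY : LinearMap.range fY = LinearMap.ker gY) :
    StDegLE A X' Y' := by
  obtain ⟨P₀, _, _, Q₀, _, _, _, _, _, _, Z, _, _, _, f, g, hf, hg, hfg⟩ := hXY
  have : IsNoetherianRing A := isNoetherian_of_tower k inferInstance
  obtain ⟨n, π, hπ⟩ := Module.Finite.exists_fin' A Z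
  obtain ⟨h, hh⟩ := Module.projective_lifting_property g π hg
  have hh' : ∀ x, g (h x) = π x := fun x => LinearMap.congr_fun hh x
  have hgf : ∀ x, g (f x) = 0 := fun x => by
    have : f x ∈ LinearMap.ker g := hfg ▸ LinearMap.mem_range_self f x
    exact this
  have hgX0 : ∀ x, gX (fX x) = 0 := fun x => by
    have : fX x ∈ LinearMap.ker gX := hX ▸ LinearMap.mem_range_self fX x
    exact this
  have hgY0 : ∀ x, gY (fY x) = 0 := fun x => by
    have : fY x ∈ LinearMap.ker gY := hY ▸ LinearMap.mem_range_self fY x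
    exact this
  have hgf' : ∀ x, g x = 0 → ∃ y, f y = x := fun x hx => by
    have : x ∈ LinearMap.range f := hfg ▸ (show x ∈ LinearMap.ker g from hx)
    exact this
  have hX' : ∀ x, gX x = 0 → ∃ y, fX y = x := fun x hx => by
    have : x ∈ LinearMap.range fX := hX ▸ (show x ∈ LinearMap.ker gX from hx)
    exact this
  have hY' : ∀ x, gY x = 0 → ∃ y, fY y = x := fun x hx => by
    have : x ∈ LinearMap.range fY := hY ▸ (show x ∈ LinearMap.ker gY from hx)
    exact this
  let c : (Q × Q₀) →ₗ[A] (Y × Q₀) := gY.prodMap LinearMap.id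
  have hc : Function.Surjective c := by
    rintro ⟨y, z⟩
    obtain ⟨x, rfl⟩ := hgY y
    exact ⟨(x, z), rfl⟩
  let p : ((Q × Q₀) × (Fin n → A)) →ₗ[A] ((X × P₀) × Z) := (f ∘ₗ c).coprod h
  let q : ((P × P₀) × (Fin n → A)) →ₗ[A] ((X × P₀) × Z) :=
    (gX.prodMap LinearMap.id).prodMap π
  have hp : Function.Surjective p := by
    intro b
    obtain ⟨r, hr⟩ := hπ (g b)
    obtain ⟨y, hy⟩ := hgf' (b - h r) (by rw [map_sub, hh', hr, sub_self])
    obtain ⟨w, rfl⟩ := hc y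
    refine ⟨(w, r), ?_⟩
    simp [p, hy]
  have hq : Function.Surjective q := by
    rintro ⟨⟨x, y⟩, z⟩
    obtain ⟨x, rfl⟩ := hgX x
    obtain ⟨z, rfl⟩ := hπ z
    exact ⟨((x, y), z), rfl⟩
  have hgp : ∀ w, g (p w) = π w.2 := fun w => by
    simp [p, hgf, hh']
  obtain ⟨e⟩ := schanuel_aux p q hp hq
  -- the kernel of `q`
  let j : (X' × LinearMap.ker π) →ₗ[A] ((P × P₀) × (Fin n → A)) :=
    (LinearMap.inl A P P₀ ∘ₗ fX).prodMap (LinearMap.ker π).subtype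
  have hj : Function.Injective j := by
    rintro ⟨x, y⟩ ⟨x', y'⟩ hxy
    have h1 : fX x = fX x' := congrArg (fun t => t.1.1) hxy
    have h2 : (y : Fin n → A) = y' := congrArg (fun t => t.2) hxy
    exact Prod.ext (hfX h1) (Subtype.ext h2)
  have hjq : LinearMap.range j = LinearMap.ker q := by
    apply le_antisymm
    · rintro _ ⟨⟨x, ⟨y, hy⟩⟩, rfl⟩
      have hy' : π y = 0 := hy
      simp [j, q, hgX0, hy']
    · rintro ⟨⟨x, y⟩, z⟩ hw
      have hw' : q ((x, y), z) = 0 := hw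
      have h1 : gX x = 0 := congrArg (fun t => t.1.1) hw'
      have h2 : y = 0 := congrArg (fun t => t.1.2) hw'
      have h3 : π z = 0 := congrArg (fun t => t.2) hw'
      obtain ⟨x, rfl⟩ := hX' x h1
      subst h2
      exact ⟨(x, ⟨z, h3⟩), rfl⟩
  let e₁ : (X' × LinearMap.ker π) ≃ₗ[A] LinearMap.ker q :=
    (LinearEquiv.ofInjective j hj).trans (LinearEquiv.ofEq _ _ hjq)
  -- the short exact sequence of kernels
  let i : Y' →ₗ[A] LinearMap.ker p :=
    LinearMap.codRestrict _
      (LinearMap.inl A (Q × Q₀) (Fin n → A) ∘ₗ LinearMap.inl A Q Q₀ ∘ₗ fY) (by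
        intro y
        simp only [p, c, LinearMap.mem_ker, LinearMap.comp_apply, LinearMap.inl_apply,
          LinearMap.coprod_apply, LinearMap.prodMap_apply, hgY0, map_zero, add_zero]
        exact map_zero f)
  have hi : Function.Injective i := by
    intro y y' hyy
    exact hfY (congrArg (fun t : LinearMap.ker p => t.1.1.1) hyy)
  let s : LinearMap.ker p →ₗ[A] LinearMap.ker π :=
    LinearMap.codRestrict _ (LinearMap.snd A _ _ ∘ₗ (LinearMap.ker p).subtype) (by
      rintro ⟨w, hw⟩
      have hw' : p w = 0 := hw
      have := hgp w
      rw [hw', map_zero] at this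
      exact this.symm)
  have hs : Function.Surjective s := by
    rintro ⟨r, hr⟩
    have hr' : π r = 0 := hr
    obtain ⟨y, hy⟩ := hgf' (- h r) (by rw [map_neg, hh', hr', neg_zero])
    obtain ⟨w, rfl⟩ := hc y
    refine ⟨⟨(w, r), ?_⟩, rfl⟩
    simp [p, hy]
  have his : ∀ w, s w = 0 → ∃ y, i y = w := by
    rintro ⟨⟨⟨a, b⟩, r⟩, hw⟩ h0
    have hr : r = 0 := congrArg Subtype.val h0
    subst hr
    have hw' : p ((a, b), 0) = 0 := hw
    have h1 : f (c (a, b)) = f 0 := by simpa [p] using hw'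
    have h2 := hf h1
    have h3 : gY a = 0 := congrArg Prod.fst h2
    have h4 : b = 0 := congrArg Prod.snd h2
    subst h4
    obtain ⟨a, rfl⟩ := hY' a h3
    exact ⟨a, rfl⟩
  have hsi : ∀ y, s (i y) = 0 := fun y => rfl
  -- the final equivalence
  let S₁ := (Q × Q₀) × (Fin n → A)
  let S₂ := (P × P₀) × (Fin n → A)
  let t : ((X' × LinearMap.ker π) × S₁) ≃ₗ[A] ((X' × S₁) × LinearMap.ker π) :=
    { toFun := fun w => ((w.1.1, w.2), w.1.2)
      invFun := fun w => ((w.1.1, w.2), w.1.2)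
      map_add' := fun _ _ => rfl
      map_smul' := fun _ _ => rfl
      left_inv := fun _ => rfl
      right_inv := fun _ => rfl }
  let E : (LinearMap.ker p × S₂) ≃ₗ[A] ((X' × S₁) × LinearMap.ker π) :=
    (e.trans (LinearEquiv.prodCongr e₁.symm (LinearEquiv.refl A S₁))).trans t
  refine ⟨S₁, inferInstance, inferInstance, S₂, inferInstance, inferInstance,
    inferInstance, inferInstance, inferInstance, inferInstance,
    LinearMap.ker π, inferInstance, inferInstance, inferInstance,
    E.toLinearMap ∘ₗ i.prodMap LinearMap.id,
    s ∘ₗ LinearMap.fst A _ _ ∘ₗ E.symm.toLinearMap, ?_, ?_, ?_⟩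
  · refine E.injective.comp ?_
    rintro ⟨x, y⟩ ⟨x', y'⟩ hxy
    have h1 : i x = i x' := congrArg Prod.fst hxy
    have h2 : y = y' := congrArg Prod.snd hxy
    exact Prod.ext (hi h1) h2
  · exact hs.comp ((Prod.fst_surjective (α := LinearMap.ker p) (β := S₂)).comp E.symm.surjective)
  · apply le_antisymm
    · rintro _ ⟨⟨x, y⟩, rfl⟩
      change s (E.symm (E (i x, y))).1 = 0
      rw [E.symm_apply_apply]
      exact hsi x
    · intro w hw
      obtain ⟨⟨a, b⟩, rfl⟩ := E.surjective w
      have hw' : s (E.symm (E (a, b))).1 = 0 := hw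
      rw [E.symm_apply_apply] at hw'
      obtain ⟨y, rfl⟩ := his a hw'
      exact ⟨(y, b), rfl⟩
end

section
/- Transitivity of quasi-stable degeneration: let A be a finite-dimensional k-algebra, let X, Y, Z be finitely generated left A-modules with fixed syzygy sequences (X_i), (Y_i), (Z_i), and let m, n, l be integers. Suppose there exists an integer k₁ with k₁ ≥ m and k₁ ≥ n such that X_{k₁-m} ≤_st Y_{k₁-n}, and there exists an integer k₂ with k₂ ≥ n and k₂ ≥ l such that Y_{k₂-n} ≤_st Z_{k₂-l}. Then there exists an integer k with k ≥ m and k ≥ l such that X_{k-m} ≤_st Z_{k-l}. -/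
universe u

/-- A syzygy sequence for `Xs 0`: for each `i` there is a short exact sequence
`0 → Xs (i+1) → P → Xs i → 0` with `P` finitely generated projective. -/
def IsSyzygySeq (A : Type u) [Ring A] (Xs : ℕ → Type u)
    [∀ i, AddCommGroup (Xs i)] [∀ i, Module A (Xs i)] : Prop :=
  ∀ i, ∃ (P : Type u) (_ : AddCommGroup P) (_ : Module A P),
    Module.Finite A P ∧ Module.Projective A P ∧
    ∃ (f : Xs (i + 1) →ₗ[A] P) (g : P →ₗ[A] Xs i),
      Function.Injective f ∧ Function.Surjective g ∧ LinearMap.range f = LinearMap.ker g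

/-! ### Lattice description of degenerations -/

/-- A (graph of a) lattice degeneration: `G` is the graph of a surjection from a sublattice of
the sequences (power series) in `M` onto `N` whose kernel is the shift of the lattice. -/
def LatDeg (A : Type u) [Ring A] (M : Type u) [AddCommGroup M] [Module A M]
    (N : Type u) [AddCommGroup N] [Module A N] : Prop :=
  ∃ (G : Submodule A ((ℕ → M) × N)) (r : ℕ),
    (∀ n, ((0 : ℕ → M), n) ∈ G → n = 0) ∧
    (∀ n, ∃ f, (f, n) ∈ G) ∧
    (∀ f : ℕ → M, (∀ i < r, f i = 0) → ∃ n, (f, n) ∈ G) ∧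
    (∀ f : ℕ → M, (f, (0 : N)) ∈ G ↔ f 0 = 0 ∧ ∃ n', ((fun i => f (i + 1)), n') ∈ G)

/-- Prepending an element to a sequence. -/
def consL (A : Type u) [Ring A] (M : Type u) [AddCommGroup M] [Module A M] :
    (M × (ℕ → M)) →ₗ[A] (ℕ → M) where
  toFun p := fun n => Nat.casesOn n p.1 p.2
  map_add' p q := by funext n; cases n <;> rfl
  map_smul' c p := by funext n; cases n <;> rfl

section
variable {A : Type u} [Ring A]
variable {M : Type u} [AddCommGroup M] [Module A M]
variable {N : Type u} [AddCommGroup N] [Module A N]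
variable {L : Type u} [AddCommGroup L] [Module A L]

theorem consL_zero (p : M × (ℕ → M)) : consL A M p 0 = p.1 := rfl
theorem consL_succ (p : M × (ℕ → M)) (i : ℕ) : consL A M p (i + 1) = p.2 i := rfl

theorem consL_tail (f : ℕ → M) : consL A M (f 0, fun i => f (i + 1)) = f := by
  funext n; cases n <;> rfl

theorem LatDeg.trans (h1 : LatDeg A M N) (h2 : LatDeg A N L) : LatDeg A M L := by
  obtain ⟨G, r, hG0, hGs, hGr, hGt⟩ := h1
  obtain ⟨G', r', hG0', hGs', hGr', hGt'⟩ := h2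
  let h := r' + 1
  have hh : 0 < h := Nat.succ_pos _
  let K : Submodule A ((ℕ → M) × L) :=
    { carrier := {p | ∃ y : ℕ → N, (y, p.2) ∈ G' ∧
        ∀ i < h, ((fun j => p.1 (h * j + i)), y i) ∈ G}
      add_mem' := by
        rintro p q ⟨y, hy, hy'⟩ ⟨z, hz, hz'⟩
        exact ⟨y + z, G'.add_mem hy hz, fun i hi => G.add_mem (hy' i hi) (hz' i hi)⟩
      zero_mem' := ⟨0, G'.zero_mem, fun i _ => G.zero_mem⟩
      smul_mem' := by
        rintro c p ⟨y, hy, hy'⟩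
        exact ⟨c • y, G'.smul_mem c hy, fun i hi => G.smul_mem c (hy' i hi)⟩ }
  have hK : ∀ f l, (f, l) ∈ K ↔ ∃ y : ℕ → N, (y, l) ∈ G' ∧
      ∀ i < h, ((fun j => f (h * j + i)), y i) ∈ G := fun f l => Iff.rfl
  refine ⟨K, h * (r + 1), ?_, ?_, ?_, ?_⟩
  · intro l hl
    obtain ⟨y, hy, hy'⟩ := (hK _ _).1 hl
    have hy0 : ∀ i < h, y i = 0 := fun i hi => hG0 _ (hy' i hi)
    have h1 : (y, (0 : L)) ∈ G' := by
      rw [hGt']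
      exact ⟨hy0 0 hh, hGr' _ fun i hi => hy0 _ (Nat.succ_lt_succ hi)⟩
    apply hG0'
    have := G'.sub_mem hy h1
    simpa using this
  · intro l
    obtain ⟨y, hy⟩ := hGs' l
    choose F hF using fun i => hGs (y i)
    refine ⟨fun n => F (n % h) (n / h), (hK _ _).2 ⟨y, hy, fun i hi => ?_⟩⟩
    have : (fun j => F ((h * j + i) % h) ((h * j + i) / h)) = F i := by
      funext j
      rw [Nat.mul_add_mod, Nat.mod_eq_of_lt hi, Nat.mul_add_div hh, Nat.div_eq_of_lt hi,
        Nat.add_zero]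
    rw [this]
    exact hF i
  · intro f hf
    refine ⟨0, (hK _ _).2 ⟨0, G'.zero_mem, fun i hi => ?_⟩⟩
    have key : ∀ j < r + 1, f (h * j + i) = 0 := by
      intro j hj
      apply hf
      calc h * j + i < h * j + h := by omega
        _ = h * (j + 1) := by ring
        _ ≤ h * (r + 1) := Nat.mul_le_mul_left _ hj
    exact (hGt _).2 ⟨key 0 (Nat.succ_pos _), hGr _ fun j hj => key (j + 1) (Nat.succ_lt_succ hj)⟩
  · intro f
    constructor
    · intro hf
      obtain ⟨y, hy, hy'⟩ := (hK _ _).1 hf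
      obtain ⟨hy0, l', hl'⟩ := (hGt' _).1 hy
      have h0 := hy' 0 hh
      rw [hy0] at h0
      obtain ⟨hf0, n', hn'⟩ := (hGt _).1 h0
      refine ⟨by simpa using hf0, ?_⟩
      let d : ℕ → N := fun i => if i = r' then n' - y (i + 1) else 0
      obtain ⟨l'', hl''⟩ := hGr' d fun i hi => if_neg (by omega)
      refine ⟨l' + l'', (hK _ _).2 ⟨_, G'.add_mem hl' hl'', fun i hi => ?_⟩⟩
      by_cases hir : i = r'
      · have e1 : ((fun i => y (i + 1)) + d) i = n' := by simp [d, hir]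
        have e2 : (fun j => f (h * j + i + 1)) = fun j => f (h * (j + 1) + 0) := by
          funext j; congr 1; rw [hir]; simp only [h]; ring
        show ((fun j => f (h * j + i + 1)), ((fun i => y (i + 1)) + d) i) ∈ G
        rw [e1, e2]; exact hn'
      · have e1 : ((fun i => y (i + 1)) + d) i = y (i + 1) := by simp [d, hir]
        show ((fun j => f (h * j + i + 1)), ((fun i => y (i + 1)) + d) i) ∈ G
        rw [e1]; exact hy' (i + 1) (by omega)
    · rintro ⟨hf0, l', hl'⟩
      obtain ⟨y', hy, hy'⟩ := (hK _ _).1 hl'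
      refine (hK _ _).2 ⟨consL A N (0, y'), (hGt' _).2 ⟨rfl, l', hy⟩, fun i hi => ?_⟩
      cases i with
      | zero =>
        refine (hGt _).2 ⟨by simpa using hf0, y' r', ?_⟩
        have := hy' r' (by omega)
        have e2 : (fun j => f (h * j + r' + 1)) = fun j => f (h * (j + 1) + 0) := by
          funext j; congr 1
        rw [← e2]; exact this
      | succ i => exact hy' i (by omega)

theorem LatDeg.degLE [Module.Finite A M] (h1 : LatDeg A M N) : DegLE A M N := by
  obtain ⟨G, r, hG0, hGs, hGr, hGt⟩ := h1
  let Q : Submodule A (ℕ → M) := G.map (LinearMap.fst A _ _)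
  have hQ : ∀ f, f ∈ Q ↔ ∃ n, (f, n) ∈ G := by
    intro f
    constructor
    · rintro ⟨⟨f', n⟩, hn, rfl⟩; exact ⟨n, hn⟩
    · rintro ⟨n, hn⟩; exact ⟨(f, n), hn, rfl⟩
  let sh : (ℕ → M) →ₗ[A] (ℕ → M) := consL A M ∘ₗ LinearMap.inr A M _
  let c0 : M →ₗ[A] (ℕ → M) := consL A M ∘ₗ LinearMap.inl A M _
  have hc : ∀ m f, c0 m + sh f = consL A M (m, f) := by
    intro m f
    simp only [c0, sh, LinearMap.comp_apply, ← map_add]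
    simp
  have hsh : Q ≤ Q.comap sh := by
    intro f hf
    exact (hQ _).2 ⟨0, (hGt _).2 ⟨rfl, (hQ _).1 hf⟩⟩
  let g : M × ((ℕ → M) ⧸ Q) →ₗ[A] ((ℕ → M) ⧸ Q) :=
    LinearMap.coprod (Q.mkQ ∘ₗ c0) (Q.mapQ Q sh hsh)
  have hg : ∀ m f, g (m, Q.mkQ f) = Q.mkQ (consL A M (m, f)) := by
    intro m f
    rw [← hc, map_add]; rfl
  have hgs : Function.Surjective g := by
    intro z
    obtain ⟨f, rfl⟩ := Q.mkQ_surjective z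
    exact ⟨(f 0, Q.mkQ fun i => f (i + 1)), by rw [hg, consL_tail]⟩
  let tl : (ℕ → M) →ₗ[A] (ℕ → M) := LinearMap.funLeft A M Nat.succ
  let φ : G →ₗ[A] M × ((ℕ → M) ⧸ Q) :=
    (LinearMap.prod (LinearMap.proj 0) (Q.mkQ ∘ₗ tl)) ∘ₗ LinearMap.fst A _ _ ∘ₗ G.subtype
  have hφ : ∀ (f : ℕ → M) n (hm : (f, n) ∈ G), φ ⟨(f, n), hm⟩ = (f 0, Q.mkQ fun i => f (i + 1)) :=
    fun f n hm => rfl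
  let ψ : G →ₗ[A] N := LinearMap.snd A _ _ ∘ₗ G.subtype
  have hψ : Function.Surjective ψ := fun n => ⟨⟨(_, n), (hGs n).choose_spec⟩, rfl⟩
  have hker : LinearMap.ker ψ = LinearMap.ker φ := by
    ext ⟨⟨f, n⟩, hm⟩
    rw [LinearMap.mem_ker, LinearMap.mem_ker, hφ]
    have e : φ ⟨(f, n), hm⟩ = 0 ↔ (f, (0 : N)) ∈ G := by
      rw [hGt, hφ, Prod.mk_eq_zero, ← hQ]
      simp [Submodule.Quotient.mk_eq_zero]
    rw [← hφ f n hm, e]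
    constructor
    · intro h0
      have h0 : n = 0 := h0
      subst h0; exact hm
    · intro h0
      apply hG0
      have := G.sub_mem hm h0
      have h5 : ((0 : ℕ → M), n) ∈ G := by simpa using this
      exact h5
  let e : N ≃ₗ[A] LinearMap.range φ :=
    (ψ.quotKerEquivOfSurjective hψ).symm ≪≫ₗ Submodule.quotEquivOfEq _ _ hker ≪≫ₗ
      φ.quotKerEquivRange
  have hfin : Module.Finite A ((ℕ → M) ⧸ Q) := by
    let ex : (Fin r → M) →ₗ[A] (ℕ → M) :=
      LinearMap.pi fun i => if hi : i < r then LinearMap.proj ⟨i, hi⟩ else 0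
    refine Module.Finite.of_surjective (Q.mkQ ∘ₗ ex) ?_
    intro z
    obtain ⟨f, rfl⟩ := Q.mkQ_surjective z
    refine ⟨fun i => f i, ?_⟩
    rw [LinearMap.comp_apply, ← sub_eq_zero, ← map_sub, ← LinearMap.mem_ker, Submodule.ker_mkQ, hQ]
    apply hGr
    intro i hi
    simp [ex, hi]
  refine ⟨(ℕ → M) ⧸ Q, inferInstance, inferInstance, hfin,
    (LinearMap.range φ).subtype ∘ₗ e.toLinearMap, g, ?_, hgs, ?_⟩
  · exact (Subtype.val_injective).comp e.injective
  · rw [LinearMap.range_comp_of_range_eq_top _ (LinearEquiv.range e), Submodule.range_subtype]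
    ext ⟨m, z⟩
    obtain ⟨f, rfl⟩ := Q.mkQ_surjective z
    rw [LinearMap.mem_ker, hg, ← LinearMap.mem_ker, Submodule.ker_mkQ, hQ]
    constructor
    · rintro ⟨⟨⟨f', n⟩, hm⟩, hx⟩
      rw [hφ] at hx
      obtain ⟨h0, h2⟩ := Prod.mk.inj hx
      rw [← sub_eq_zero, ← map_sub, ← LinearMap.mem_ker, Submodule.ker_mkQ] at h2
      have h3 : consL A M (0, (fun i => f' (i + 1)) - f) ∈ Q := hsh h2
      have h4 := Q.sub_mem ((hQ _).2 ⟨n, hm⟩) h3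
      rw [← hQ]
      convert h4 using 1
      funext i
      cases i with
      | zero => simp [consL_zero, h0]
      | succ i => simp [consL_succ]
    · rintro ⟨n, hm⟩
      exact ⟨⟨_, hm⟩, rfl⟩

theorem DegLE.nilp [IsArtinianRing A] (h1 : DegLE A M N) :
    ∃ (Z : Type u) (_ : AddCommGroup Z) (_ : Module A Z),
    ∃ (f : N →ₗ[A] M × Z) (a : M →ₗ[A] Z) (t : Z →ₗ[A] Z) (r : ℕ),
      Function.Injective f ∧ (∀ z, ∃ m z', z = a m + t z') ∧
      (∀ m z, (∃ n, f n = (m, z)) ↔ a m + t z = 0) ∧ t ^ r = 0 := by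
  obtain ⟨Z, _, _, hZ, f, g, hf, hg, hfg⟩ := h1
  let a : M →ₗ[A] Z := g ∘ₗ LinearMap.inl A M Z
  let t : Z →ₗ[A] Z := g ∘ₗ LinearMap.inr A M Z
  have hgat : ∀ m z, g (m, z) = a m + t z := by
    intro m z
    simp only [a, t, LinearMap.comp_apply, ← map_add]
    simp
  obtain ⟨r0, hr0⟩ := Filter.eventually_atTop.1
    (LinearMap.eventually_isCompl_ker_pow_range_pow t)
  obtain ⟨r, hr, hr1⟩ : ∃ r, IsCompl (LinearMap.ker (t ^ r)) (LinearMap.range (t ^ r)) ∧ 1 ≤ r :=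
    ⟨r0 + 1, hr0 _ (by omega), by omega⟩
  have hpow : ∀ i j w, (t ^ i) ((t ^ j) w) = (t ^ (i + j)) w := by
    intro i j w
    rw [pow_add]; rfl
  have htp : ∀ j w, t ((t ^ j) w) = (t ^ (j + 1)) w := by
    intro j w
    rw [pow_succ']; rfl
  have hrange : ∀ w, ∃ w', (t ^ r) w = (t ^ (r + 1)) w' := by
    intro w
    have hw : w ∈ LinearMap.ker (t ^ r) ⊔ LinearMap.range (t ^ r) := by
      rw [hr.sup_eq_top]; trivial
    obtain ⟨x, hx, _, ⟨y, rfl⟩, rfl⟩ := Submodule.mem_sup.1 hw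
    have hx : (t ^ r) x = 0 := hx
    refine ⟨(t ^ (r - 1)) y, ?_⟩
    rw [map_add, hx, zero_add, hpow, hpow]
    congr 2; omega
  have hkern : ∀ w, (t ^ (r + 1)) w = 0 → (t ^ r) w = 0 := by
    intro w hw
    have h2 : (t ^ r) w ∈ LinearMap.ker (t ^ r) ⊓ LinearMap.range (t ^ r) := by
      refine ⟨?_, ⟨w, rfl⟩⟩
      rw [SetLike.mem_coe, LinearMap.mem_ker, hpow, show r + r = (r - 1) + (r + 1) by omega,
        ← hpow, hw, map_zero]
    rw [hr.inf_eq_bot] at h2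
    exact h2
  let R := LinearMap.range (t ^ r)
  have htR : R ≤ R.comap t := by
    rintro _ ⟨w, rfl⟩
    refine ⟨t w, ?_⟩
    have := hpow r 1 w
    rw [pow_one] at this
    rw [this, htp]
  have htb : ∀ z, R.mapQ R t htR (R.mkQ z) = R.mkQ (t z) := fun z => rfl
  have hmk : ∀ z, R.mkQ z = 0 ↔ ∃ w, (t ^ r) w = z := by
    intro z
    rw [← LinearMap.mem_ker, Submodule.ker_mkQ]; rfl
  refine ⟨Z ⧸ R, inferInstance, inferInstance, (LinearMap.prodMap LinearMap.id R.mkQ) ∘ₗ f,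
    R.mkQ ∘ₗ a, R.mapQ R t htR, r, ?_, ?_, ?_, ?_⟩
  · rw [injective_iff_map_eq_zero]
    intro n hn
    have hn : ((f n).1, R.mkQ (f n).2) = 0 := hn
    obtain ⟨h0, h2⟩ := Prod.mk_eq_zero.1 hn
    obtain ⟨w, hw⟩ := (hmk _).1 h2
    have h3 : g (f n) = 0 := by
      rw [← LinearMap.mem_ker, ← hfg]; exact ⟨n, rfl⟩
    have h4 : f n = (0, (t ^ r) w) := Prod.ext h0 hw.symm
    rw [h4, hgat, map_zero, zero_add, htp] at h3
    rw [hkern w h3] at h4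
    exact hf (h4.trans (map_zero f).symm)
  · intro z
    obtain ⟨z, rfl⟩ := R.mkQ_surjective z
    obtain ⟨⟨m, z'⟩, rfl⟩ := hg z
    exact ⟨m, R.mkQ z', by rw [hgat, map_add, htb]; rfl⟩
  · intro m z
    constructor
    · rintro ⟨n, hn⟩
      have hn : ((f n).1, R.mkQ (f n).2) = (m, z) := hn
      obtain ⟨rfl, rfl⟩ := Prod.mk.inj hn
      have h3 : g (f n) = 0 := by
        rw [← LinearMap.mem_ker, ← hfg]; exact ⟨n, rfl⟩
      rw [htb, LinearMap.comp_apply, ← map_add, ← hgat, Prod.mk.eta, h3, map_zero]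
    · intro h0
      obtain ⟨z, rfl⟩ := R.mkQ_surjective z
      rw [htb, LinearMap.comp_apply, ← map_add, hmk] at h0
      obtain ⟨w, hw⟩ := h0
      obtain ⟨w', hw'⟩ := hrange w
      have h3 : (m, z - (t ^ r) w') ∈ LinearMap.range f := by
        rw [hfg, LinearMap.mem_ker, hgat, map_sub, htp, ← hw', hw]
        abel
      obtain ⟨n, hn⟩ := h3
      refine ⟨n, ?_⟩
      show ((f n).1, R.mkQ (f n).2) = _
      rw [hn]
      refine Prod.ext rfl ?_
      show R.mkQ (z - (t ^ r) w') = R.mkQ z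
      rw [map_sub, (hmk _).2 ⟨w', rfl⟩, sub_zero]
  · have hp : ∀ i z, ((R.mapQ R t htR) ^ i) (R.mkQ z) = R.mkQ ((t ^ i) z) := by
      intro i
      induction i with
      | zero => intro z; rfl
      | succ i ih =>
        intro z
        rw [pow_succ, pow_succ, Module.End.mul_apply, Module.End.mul_apply, htb, ih]
    ext z
    show ((R.mapQ R t htR) ^ r) (R.mkQ z) = 0
    rw [hp, hmk]; exact ⟨z, rfl⟩

theorem DegLE.latDeg [IsArtinianRing A] (h1 : DegLE A M N) : LatDeg A M N := by
  obtain ⟨Z, _, _, f, a, t, r, hf, hs, hk, ht⟩ := h1.nilp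
  let π : (ℕ → M) →ₗ[A] Z := ∑ i ∈ Finset.range r, ((-t) ^ i) ∘ₗ a ∘ₗ LinearMap.proj i
  have hπ : ∀ p, π p = ∑ i ∈ Finset.range r, ((-t) ^ i) (a (p i)) := by
    intro p; simp [π]
  have ht' : (-t) ^ r = 0 := by rw [neg_pow, ht, mul_zero]
  have hπt : ∀ p : ℕ → M, π p = a (p 0) - t (π fun i => p (i + 1)) := by
    intro p
    have h2 : ∑ i ∈ Finset.range (r + 1), ((-t) ^ i) (a (p i)) = π p := by
      rw [Finset.sum_range_succ, ht', hπ]; simp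
    rw [← h2, Finset.sum_range_succ', hπ, map_sum, sub_eq_add_neg, ← Finset.sum_neg_distrib,
      add_comm]
    congr 1
    refine Finset.sum_congr rfl fun i _ => ?_
    rw [pow_succ']; rfl
  have hπ0 : ∀ p : ℕ → M, (∀ i < r, p i = 0) → π p = 0 := by
    intro p hp
    rw [hπ]
    exact Finset.sum_eq_zero fun i hi => by rw [hp i (Finset.mem_range.1 hi)]; simp
  have hπs : ∀ z, ∃ p, π p = z := by
    have key : ∀ j z, ∃ p z', z = π p + (t ^ j) z' := by
      intro j
      induction j with
      | zero => intro z; exact ⟨0, z, by simp⟩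
      | succ j ih =>
        intro z
        obtain ⟨m, z1, rfl⟩ := hs z
        obtain ⟨p, z', rfl⟩ := ih z1
        refine ⟨consL A M (m, -p), z', ?_⟩
        rw [hπt (consL A M (m, -p))]
        have : (fun i => consL A M (m, -p) (i + 1)) = -p := rfl
        rw [this, consL_zero, map_neg, map_neg, sub_neg_eq_add, map_add, pow_succ',
          Module.End.mul_apply, add_assoc]
    intro z
    obtain ⟨p, z', h⟩ := key r z
    exact ⟨p, by rw [h, ht]; simp⟩
  let tl : (ℕ → M) →ₗ[A] (ℕ → M) := LinearMap.funLeft A M Nat.succ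
  let G : Submodule A ((ℕ → M) × N) := LinearMap.ker
    ((LinearMap.prod (LinearMap.proj 0) (-(π ∘ₗ tl))) ∘ₗ LinearMap.fst A _ _
      - f ∘ₗ LinearMap.snd A (ℕ → M) N)
  have hG : ∀ p n, (p, n) ∈ G ↔ f n = (p 0, -π fun i => p (i + 1)) := by
    intro p n
    rw [eq_comm, ← sub_eq_zero]; rfl
  have hGπ : ∀ p, (∃ n, (p, n) ∈ G) ↔ π p = 0 := by
    intro p
    simp only [hG]
    rw [hk, hπt p, map_neg, sub_eq_add_neg]
  refine ⟨G, r, ?_, ?_, ?_, ?_⟩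
  · intro n hn
    rw [hG] at hn
    apply hf
    rw [hn, map_zero]
    have : (fun i : ℕ => (0 : ℕ → M) (i + 1)) = 0 := rfl
    rw [this, map_zero, neg_zero]; rfl
  · intro n
    obtain ⟨p, hp⟩ := hπs (-(f n).2)
    refine ⟨consL A M ((f n).1, p), (hG _ _).2 ?_⟩
    have : (fun i => consL A M ((f n).1, p) (i + 1)) = p := rfl
    rw [this, hp, neg_neg]; rfl
  · intro p hp
    exact (hGπ p).2 (hπ0 p hp)
  · intro p
    rw [hGπ, hG, map_zero, eq_comm, Prod.mk_eq_zero, neg_eq_zero]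

theorem DegLE.trans' [IsArtinianRing A] [Module.Finite A M]
    (h1 : DegLE A M N) (h2 : DegLE A N L) : DegLE A M L :=
  (h1.latDeg.trans h2.latDeg).degLE

/-- Flexible constructor for `DegLE`. -/
theorem DegLE.of_mid {W Z : Type u} [AddCommGroup W] [Module A W] [AddCommGroup Z] [Module A Z]
    [Module.Finite A Z] (e : (M × Z) →ₗ[A] W) (he : Function.Bijective e)
    (i : N →ₗ[A] W) (h : W →ₗ[A] Z) (hi : Function.Injective i) (hh : Function.Surjective h)
    (hih : LinearMap.range i = LinearMap.ker h) : DegLE A M N := by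
  let E := LinearEquiv.ofBijective e he
  refine ⟨Z, inferInstance, inferInstance, inferInstance, E.symm.toLinearMap ∘ₗ i,
    h ∘ₗ E.toLinearMap, E.symm.injective.comp hi, hh.comp E.surjective, ?_⟩
  ext x
  rw [LinearMap.mem_ker, LinearMap.comp_apply, ← LinearMap.mem_ker, ← hih]
  constructor
  · rintro ⟨n, rfl⟩; exact ⟨n, by simp⟩
  · rintro ⟨n, hn⟩; exact ⟨n, by simp [hn]⟩

/-- Adding a common summand (and permuting summands). -/
theorem DegLE.add {M' N' P : Type u} [AddCommGroup P] [Module A P]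
    [AddCommGroup M'] [Module A M'] [AddCommGroup N'] [Module A N'] (h1 : DegLE A M N)
    (eM : M' ≃ₗ[A] M × P) (eN : N' ≃ₗ[A] N × P) : DegLE A M' N' := by
  obtain ⟨Z, _, _, hZ, f, g, hf, hg, hfg⟩ := h1
  have hgf : ∀ n, g (f n) = 0 := fun n => by
    rw [← LinearMap.mem_ker, ← hfg]; exact ⟨n, rfl⟩
  let e : (M' × Z) →ₗ[A] (M × Z) × P :=
    LinearMap.prod (LinearMap.prodMap (LinearMap.fst A M P ∘ₗ eM.toLinearMap) LinearMap.id)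
      (LinearMap.snd A M P ∘ₗ eM.toLinearMap ∘ₗ LinearMap.fst A M' Z)
  have he : ∀ m z, e (m, z) = (((eM m).1, z), (eM m).2) := fun m z => rfl
  refine DegLE.of_mid (W := (M × Z) × P) (Z := Z) e ⟨?_, ?_⟩
    ((LinearMap.prodMap f LinearMap.id) ∘ₗ eN.toLinearMap) (g ∘ₗ LinearMap.fst A _ _) ?_ ?_ ?_
  · rintro ⟨m, z⟩ ⟨m', z'⟩ h
    rw [he, he] at h
    simp only [Prod.mk.injEq] at h
    obtain ⟨⟨h1, h2⟩, h3⟩ := h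
    exact Prod.ext (eM.injective (Prod.ext h1 h3)) h2
  · rintro ⟨⟨m, z⟩, p⟩
    exact ⟨(eM.symm (m, p), z), by rw [he]; simp⟩
  · exact (Function.Injective.prodMap hf Function.injective_id).comp eN.injective
  · intro z
    obtain ⟨x, hx⟩ := hg z
    exact ⟨(x, 0), hx⟩
  · ext ⟨x, p⟩
    rw [LinearMap.mem_ker]
    show _ ↔ g x = 0
    rw [← LinearMap.mem_ker, ← hfg]
    constructor
    · rintro ⟨n, hn⟩
      exact ⟨(eN n).1, congrArg Prod.fst hn⟩
    · rintro ⟨n, rfl⟩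
      exact ⟨eN.symm (n, p), by simp⟩

/-- Swapping the last two summands. -/
def swapE (A : Type u) [Ring A] (M N L : Type u) [AddCommGroup M] [Module A M]
    [AddCommGroup N] [Module A N] [AddCommGroup L] [Module A L] :
    ((M × N) × L) ≃ₗ[A] (M × L) × N :=
  LinearEquiv.prodAssoc A M N L ≪≫ₗ
    LinearEquiv.prodCongr (LinearEquiv.refl A M) (LinearEquiv.prodComm A N L) ≪≫ₗ
    (LinearEquiv.prodAssoc A M L N).symm

theorem StDegLE.trans' [IsArtinianRing A] [Module.Finite A M]
    (h1 : StDegLE A M N) (h2 : StDegLE A N L) : StDegLE A M L := by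
  obtain ⟨P, _, _, Q, _, _, _, _, _, _, h1⟩ := h1
  obtain ⟨P', _, _, Q', _, _, _, _, _, _, h2⟩ := h2
  refine ⟨P × P', inferInstance, inferInstance, Q' × Q, inferInstance, inferInstance,
    inferInstance, inferInstance, inferInstance, inferInstance, ?_⟩
  have k1 : DegLE A (M × (P × P')) ((N × Q) × P') :=
    h1.add (LinearEquiv.prodAssoc A M P P').symm (LinearEquiv.refl A _)
  have k2 : DegLE A ((N × Q) × P') (L × (Q' × Q)) :=
    h2.add (swapE A N Q P') (LinearEquiv.prodAssoc A L Q' Q).symm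
  exact k1.trans' k2

theorem StDegLE.syzygy [IsArtinianRing A] {X Y X' Y' PX PY : Type u}
    [AddCommGroup X] [Module A X] [AddCommGroup Y] [Module A Y]
    [AddCommGroup X'] [Module A X'] [AddCommGroup Y'] [Module A Y']
    [AddCommGroup PX] [Module A PX] [AddCommGroup PY] [Module A PY]
    [Module.Finite A PX] [Module.Projective A PX] [Module.Finite A PY] [Module.Projective A PY]
    (fX : X' →ₗ[A] PX) (gX : PX →ₗ[A] X) (fY : Y' →ₗ[A] PY) (gY : PY →ₗ[A] Y)
    (hfX : Function.Injective fX) (hgX : Function.Surjective gX)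
    (hX : LinearMap.range fX = LinearMap.ker gX)
    (hfY : Function.Injective fY) (hgY : Function.Surjective gY)
    (hY : LinearMap.range fY = LinearMap.ker gY)
    (h : StDegLE A X Y) : StDegLE A X' Y' := by
  obtain ⟨P, _, _, Q, _, _, _, _, _, _, Z, _, _, _, ι, g, hι, hg, hιg⟩ := h
  have kX : ∀ p, gX p = 0 ↔ ∃ x, fX x = p := fun p => by
    rw [← LinearMap.mem_ker, ← hX]; rfl
  have kY : ∀ p, gY p = 0 ↔ ∃ x, fY x = p := fun p => by
    rw [← LinearMap.mem_ker, ← hY]; rfl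
  have kg : ∀ p, g p = 0 ↔ ∃ x, ι x = p := fun p => by
    rw [← LinearMap.mem_ker, ← hιg]; rfl
  obtain ⟨n, dZ, hdZ⟩ := Module.Finite.exists_fin' A Z
  obtain ⟨s, hs⟩ := Module.projective_lifting_property g dZ hg
  have hs : ∀ v, g (s v) = dZ v := fun v => LinearMap.congr_fun hs v
  -- the two projective covers of the middle term
  let a : (PY × Q) × (Fin n → A) →ₗ[A] (X × P) × Z :=
    LinearMap.coprod (ι ∘ₗ LinearMap.prodMap gY LinearMap.id) s
  let b : (PX × P) × (Fin n → A) →ₗ[A] (X × P) × Z :=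
    LinearMap.prodMap (LinearMap.prodMap gX LinearMap.id) dZ
  have ha : ∀ y q v, a ((y, q), v) = ι (gY y, q) + s v := fun y q v => rfl
  have hb : ∀ x p v, b ((x, p), v) = ((gX x, p), dZ v) := fun x p v => rfl
  have hga : ∀ u, g (a u) = dZ u.2 := by
    rintro ⟨⟨y, q⟩, v⟩
    rw [ha, map_add, (kg _).2 ⟨_, rfl⟩, hs, zero_add]
  have has : Function.Surjective a := by
    intro e
    obtain ⟨v, hv⟩ := hdZ (g e)
    obtain ⟨⟨y, q⟩, hy⟩ := (kg (e - s v)).1 (by rw [map_sub, hs, hv, sub_self])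
    obtain ⟨y, rfl⟩ := hgY y
    exact ⟨((y, q), v), by rw [ha, hy]; abel⟩
  have hbs : Function.Surjective b := by
    rintro ⟨⟨x, p⟩, z⟩
    obtain ⟨x, rfl⟩ := hgX x
    obtain ⟨z, rfl⟩ := hdZ z
    exact ⟨((x, p), z), rfl⟩
  obtain ⟨l, hl⟩ := Module.projective_lifting_property a b has
  obtain ⟨μ, hμ⟩ := Module.projective_lifting_property b a hbs
  have hl : ∀ t, a (l t) = b t := fun t => LinearMap.congr_fun hl t
  have hμ : ∀ t, b (μ t) = a t := fun t => LinearMap.congr_fun hμ t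
  let U := (PY × Q) × (Fin n → A)
  let T := (PX × P) × (Fin n → A)
  let K := LinearMap.ker dZ
  let W : Submodule A (U × T) := LinearMap.ker (a ∘ₗ LinearMap.fst A U T - b ∘ₗ LinearMap.snd A U T)
  have hW : ∀ w : U × T, w ∈ W ↔ a w.1 = b w.2 := by
    intro w; rw [← sub_eq_zero]; rfl
  let e0 : ((X' × U) × K) →ₗ[A] U × T :=
    LinearMap.prod (LinearMap.snd A X' U ∘ₗ LinearMap.fst A _ _)
      (μ ∘ₗ LinearMap.snd A X' U ∘ₗ LinearMap.fst A _ _ +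
        LinearMap.prodMap (LinearMap.inl A PX P ∘ₗ fX ∘ₗ LinearMap.fst A X' U) K.subtype)
  have he0 : ∀ x u (z : K), e0 ((x, u), z) = (u, μ u + ((fX x, 0), z.1)) := fun x u z => rfl
  have he0W : ∀ x, e0 x ∈ W := by
    rintro ⟨⟨x, u⟩, z⟩
    rw [hW, he0]
    show a u = b (μ u + ((fX x, 0), z.1))
    rw [map_add, hμ, hb, (kX _).2 ⟨x, rfl⟩, z.2]
    simp
  let i0 : (Y' × T) →ₗ[A] U × T :=
    LinearMap.prod (l ∘ₗ LinearMap.snd A Y' T +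
      LinearMap.inl A (PY × Q) (Fin n → A) ∘ₗ LinearMap.inl A PY Q ∘ₗ fY ∘ₗ LinearMap.fst A Y' T)
      (LinearMap.snd A Y' T)
  have hi0 : ∀ y t, i0 (y, t) = (l t + ((fY y, 0), 0), t) := fun y t => rfl
  have hi0W : ∀ x, i0 x ∈ W := by
    rintro ⟨y, t⟩
    rw [hW, hi0]
    show a (l t + ((fY y, 0), 0)) = b t
    rw [map_add, hl, ha, (kY _).2 ⟨y, rfl⟩, ← Prod.zero_eq_mk, map_zero, map_zero]
    simp
  let h0 : W →ₗ[A] (Fin n → A) := LinearMap.snd A (PY × Q) (Fin n → A) ∘ₗ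
    (LinearMap.fst A U T - l ∘ₗ LinearMap.snd A U T) ∘ₗ W.subtype
  have hh0 : ∀ w : W, h0 w = (w.1.1 - l w.1.2).2 := fun w => rfl
  have ha0 : ∀ w : W, a (w.1.1 - l w.1.2) = 0 := by
    intro w
    rw [map_sub, hl, (hW _).1 w.2, sub_self]
  have hh0K : ∀ w, h0 w ∈ K := by
    intro w
    rw [LinearMap.mem_ker, hh0, ← hga, ha0, map_zero]
  refine ⟨U, inferInstance, inferInstance, T, inferInstance, inferInstance,
    inferInstance, inferInstance, inferInstance, inferInstance, ?_⟩
  refine DegLE.of_mid (W := W) (Z := K) (e0.codRestrict W he0W) ⟨?_, ?_⟩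
    (i0.codRestrict W hi0W) (h0.codRestrict K hh0K) ?_ ?_ ?_
  · rw [injective_iff_map_eq_zero]
    rintro ⟨⟨x, u⟩, z⟩ hx
    have hx : e0 ((x, u), z) = 0 := congrArg Subtype.val hx
    rw [he0, Prod.mk_eq_zero] at hx
    obtain ⟨rfl, hx⟩ := hx
    rw [map_zero, zero_add, Prod.mk_eq_zero, Prod.mk_eq_zero] at hx
    obtain ⟨⟨hx, -⟩, hz⟩ := hx
    have hx : x = 0 := hfX (hx.trans (map_zero fX).symm)
    have hz : z = 0 := Subtype.ext hz
    rw [hx, hz]; rfl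
  · rintro ⟨⟨u, t⟩, hw⟩
    rw [hW] at hw
    have hbt : b (t - μ u) = 0 := by rw [map_sub, hμ, sub_eq_zero]; exact hw.symm
    obtain ⟨⟨⟨x, p⟩, v⟩, hv⟩ : ∃ t', t' = t - μ u := ⟨_, rfl⟩
    rw [← hv, hb, Prod.mk_eq_zero, Prod.mk_eq_zero] at hbt
    obtain ⟨⟨hx, hp⟩, hz⟩ := hbt
    obtain ⟨x, rfl⟩ := (kX _).1 hx
    refine ⟨((x, u), ⟨v, hz⟩), Subtype.ext ?_⟩
    show e0 _ = (u, t)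
    rw [he0]
    refine Prod.ext rfl ?_
    show μ u + ((fX x, 0), v) = t
    rw [← hp, hv]; abel
  · rw [injective_iff_map_eq_zero]
    rintro ⟨y, t⟩ hx
    have hx : i0 (y, t) = 0 := congrArg Subtype.val hx
    rw [hi0, Prod.mk_eq_zero] at hx
    obtain ⟨hx, rfl⟩ := hx
    rw [map_zero, zero_add, Prod.mk_eq_zero, Prod.mk_eq_zero] at hx
    have hy : y = 0 := hfY (hx.1.1.trans (map_zero fY).symm)
    rw [hy]; rfl
  · rintro ⟨v, hv⟩
    have hv' : dZ v = 0 := hv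
    obtain ⟨⟨y, q⟩, hy⟩ := (kg (s v)).1 (by rw [hs, hv'])
    obtain ⟨y, rfl⟩ := hgY y
    refine ⟨⟨(((-y, -q), v), 0), ?_⟩, Subtype.ext ?_⟩
    · rw [hW]
      show a ((-y, -q), v) = b 0
      rw [ha, map_zero, ← hy, map_neg, ← Prod.neg_mk, map_neg, neg_add_cancel]
    · show h0 _ = v
      rw [hh0]
      show (((-y, -q), v) - l 0).2 = v
      rw [map_zero, sub_zero]
  · ext ⟨⟨u, t⟩, hw⟩
    constructor
    · rintro ⟨⟨y, t'⟩, hx⟩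
      have hx : i0 (y, t') = (u, t) := congrArg Subtype.val hx
      rw [hi0] at hx
      obtain ⟨rfl, rfl⟩ := Prod.mk.inj hx
      refine Subtype.ext ?_
      show (l t' + ((fY y, 0), 0) - l t').2 = 0
      rw [add_sub_cancel_left]
    · intro hx
      have hx : (u - l t).2 = 0 := congrArg Subtype.val hx
      have h2 : a (u - l t) = 0 := ha0 ⟨(u, t), hw⟩
      obtain ⟨⟨⟨y, q⟩, v⟩, hv⟩ : ∃ t', t' = u - l t := ⟨_, rfl⟩
      rw [← hv] at hx h2
      have hx : v = 0 := hx
      subst hx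
      rw [ha, map_zero, add_zero] at h2
      have h3 := hι (h2.trans (map_zero ι).symm)
      rw [Prod.mk_eq_zero] at h3
      obtain ⟨h3, h4⟩ := h3
      obtain ⟨y, rfl⟩ := (kY _).1 h3
      refine ⟨(y, t), Subtype.ext ?_⟩
      show i0 _ = (u, t)
      rw [hi0]
      refine Prod.ext ?_ rfl
      show l t + ((fY y, 0), 0) = u
      rw [← h4, hv]; abel

theorem StDegLE.shift [IsArtinianRing A]
    (Xs : ℕ → Type u) [∀ i, AddCommGroup (Xs i)] [∀ i, Module A (Xs i)]
    (Ys : ℕ → Type u) [∀ i, AddCommGroup (Ys i)] [∀ i, Module A (Ys i)]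
    (hXs : IsSyzygySeq A Xs) (hYs : IsSyzygySeq A Ys) (i j : ℕ)
    (h : StDegLE A (Xs i) (Ys j)) (d : ℕ) : StDegLE A (Xs (i + d)) (Ys (j + d)) := by
  induction d with
  | zero => exact h
  | succ d ih =>
    obtain ⟨P, _, _, _, _, f, g, h1, h2, h3⟩ := hXs (i + d)
    obtain ⟨P', _, _, _, _, f', g', h1', h2', h3'⟩ := hYs (j + d)
    exact ih.syzygy f g f' g' h1 h2 h3 h1' h2' h3'
end

/-- Transitivity of quasi-stable degeneration. -/
theorem quasi_stable_degeneration_trans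
    (k : Type u) [Field k] (A : Type u) [Ring A] [Algebra k A] [FiniteDimensional k A]
    (Xs : ℕ → Type u) [∀ i, AddCommGroup (Xs i)] [∀ i, Module A (Xs i)]
    [∀ i, Module.Finite A (Xs i)]
    (Ys : ℕ → Type u) [∀ i, AddCommGroup (Ys i)] [∀ i, Module A (Ys i)]
    [∀ i, Module.Finite A (Ys i)]
    (Zs : ℕ → Type u) [∀ i, AddCommGroup (Zs i)] [∀ i, Module A (Zs i)]
    [∀ i, Module.Finite A (Zs i)]
    (hXs : IsSyzygySeq A Xs) (hYs : IsSyzygySeq A Ys) (hZs : IsSyzygySeq A Zs)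
    (m n l : ℤ)
    (h₁ : ∃ k₁ : ℤ, m ≤ k₁ ∧ n ≤ k₁ ∧ StDegLE A (Xs (k₁ - m).toNat) (Ys (k₁ - n).toNat))
    (h₂ : ∃ k₂ : ℤ, n ≤ k₂ ∧ l ≤ k₂ ∧ StDegLE A (Ys (k₂ - n).toNat) (Zs (k₂ - l).toNat)) :
    ∃ k : ℤ, m ≤ k ∧ l ≤ k ∧ StDegLE A (Xs (k - m).toNat) (Zs (k - l).toNat) := by
  have : IsArtinianRing A := IsArtinianRing.of_finite k A
  obtain ⟨k₁, hm1, hn1, h₁⟩ := h₁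
  obtain ⟨k₂, hn2, hl2, h₂⟩ := h₂
  refine ⟨max k₁ k₂, by omega, by omega, ?_⟩
  have e1 := h₁.shift Xs Ys hXs hYs _ _ (max k₁ k₂ - k₁).toNat
  have e2 := h₂.shift Ys Zs hYs hZs _ _ (max k₁ k₂ - k₂).toNat
  rw [show (k₁ - m).toNat + (max k₁ k₂ - k₁).toNat = (max k₁ k₂ - m).toNat by omega,
    show (k₁ - n).toNat + (max k₁ k₂ - k₁).toNat = (max k₁ k₂ - n).toNat by omega] at e1
  rw [show (k₂ - n).toNat + (max k₁ k₂ - k₂).toNat = (max k₁ k₂ - n).toNat by omega,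
    show (k₂ - l).toNat + (max k₁ k₂ - k₂).toNat = (max k₁ k₂ - l).toNat by omega] at e2
  exact e1.trans' e2
end

section
/- Antisymmetry of quasi-stable degeneration: let A be a finite-dimensional k-algebra, let X, Y be finitely generated left A-modules with fixed syzygy sequences (X_i) and (Y_i), and let m, n be integers. Suppose there exists an integer k₁ with k₁ ≥ m and k₁ ≥ n such that X_{k₁-m} ≤_st Y_{k₁-n}, and there exists an integer k₂ with k₂ ≥ m and k₂ ≥ n such that Y_{k₂-n} ≤_st X_{k₂-m}. Then there exist an integer k with k ≥ m and k ≥ n and finitely generated projective A-modules P and Q such that X_{k-m} ⊕ P ≅ Y_{k-n} ⊕ Q as A-modules. -/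
universe u


section QSD
open Module

variable {k : Type u} [Field k] {A : Type u} [Ring A] [Algebra k A] 

theorem hom_finite (M U : Type u) [AddCommGroup M] [Module A M] [Module k M] [IsScalarTower k A M]
    [AddCommGroup U] [Module A U] [Module k U] [IsScalarTower k A U]
    [Module.Finite k M] [Module.Finite k U] : Module.Finite k (M →ₗ[A] U) :=
  Module.Finite.of_injective (LinearMap.restrictScalarsₗ k A M U k)
    (LinearMap.restrictScalars_injective k)

theorem sub_finite {M : Type u} [AddCommGroup M] [Module A M] [Module k M] [IsScalarTower k A M]
    [Module.Finite k M] (p : Submodule A M) : Module.Finite k p :=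
  Module.Finite.of_injective (p.subtype.restrictScalars k) p.subtype_injective

/-- postcomposition -/
def postc (k : Type u) [Field k] {A : Type u} [Ring A] [Algebra k A]
    (L : Type u) {E V : Type u} [AddCommGroup L] [Module A L]
    [AddCommGroup E] [Module A E] [Module k E] [IsScalarTower k A E]
    [AddCommGroup V] [Module A V] [Module k V] [IsScalarTower k A V]
    (F : E →ₗ[A] V) : (L →ₗ[A] E) →ₗ[k] (L →ₗ[A] V) where
  toFun h := F ∘ₗ h
  map_add' x y := by ext; simp
  map_smul' c x := by
    ext l
    simp only [LinearMap.comp_apply, LinearMap.smul_apply, RingHom.id_apply]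
    exact (F.restrictScalars k).map_smul c (x l)

theorem hom_le_of_exact
    {N E Z : Type u} (U : Type u) [AddCommGroup N] [Module A N] [Module k N] [IsScalarTower k A N]
    [AddCommGroup E] [Module A E] [Module k E] [IsScalarTower k A E]
    [AddCommGroup Z] [Module A Z] [Module k Z] [IsScalarTower k A Z]
    [AddCommGroup U] [Module A U] [Module k U] [IsScalarTower k A U]
    [Module.Finite k N] [Module.Finite k E] [Module.Finite k Z] [Module.Finite k U]
    (f : N →ₗ[A] E) (g : E →ₗ[A] Z) (hg : Function.Surjective g)
    (hfg : LinearMap.range f = LinearMap.ker g) :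
    finrank k (E →ₗ[A] U) ≤ finrank k (N →ₗ[A] U) + finrank k (Z →ₗ[A] U) := by
  have := hom_finite (k := k) (A := A) N U
  have := hom_finite (k := k) (A := A) E U
  have := hom_finite (k := k) (A := A) Z U
  let φ : (E →ₗ[A] U) →ₗ[k] (N →ₗ[A] U) := LinearMap.lcomp k U f
  let ψ : (Z →ₗ[A] U) →ₗ[k] (E →ₗ[A] U) := LinearMap.lcomp k U g
  have hk : LinearMap.ker φ ≤ LinearMap.range ψ := by
    intro h hh
    have hh' : h ∘ₗ f = 0 := hh
    have hle : LinearMap.ker g ≤ LinearMap.ker h := by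
      rw [← hfg]; rintro _ ⟨x, rfl⟩; exact LinearMap.congr_fun hh' x
    refine ⟨(LinearMap.ker g).liftQ h hle ∘ₗ (g.quotKerEquivOfSurjective hg).symm.toLinearMap, ?_⟩
    ext e
    show (LinearMap.ker g).liftQ h hle ((g.quotKerEquivOfSurjective hg).symm (g e)) = h e
    have : (g.quotKerEquivOfSurjective hg).symm (g e) = Submodule.Quotient.mk e := by
      rw [LinearEquiv.symm_apply_eq]; rfl
    rw [this]; rfl
  have h1 := LinearMap.finrank_range_add_finrank_ker φ
  have h2 := Submodule.finrank_mono hk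
  have h3 := LinearMap.finrank_range_le ψ
  have h4 := Submodule.finrank_le (LinearMap.range φ)
  omega

theorem hom_ker
    (L : Type u) {E V : Type u} [AddCommGroup L] [Module A L] [Module k L] [IsScalarTower k A L]
    [AddCommGroup E] [Module A E] [Module k E] [IsScalarTower k A E]
    [AddCommGroup V] [Module A V] [Module k V] [IsScalarTower k A V]
    [Module.Finite k L] [Module.Finite k E] [Module.Finite k V]
    (F : E →ₗ[A] V) :
    finrank k (LinearMap.range (postc k L F)) + finrank k (L →ₗ[A] LinearMap.ker F) =
      finrank k (L →ₗ[A] E) := by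
  have := hom_finite (k := k) (A := A) L E
  rw [← LinearMap.finrank_range_add_finrank_ker (postc k L F)]
  let ι := postc k L (LinearMap.ker F).subtype
  have hi : Function.Injective ι := by
    intro a b hab
    ext x
    exact congrArg (fun h : L →ₗ[A] E => h x) hab
  rw [← LinearMap.finrank_range_of_inj hi]
  have : LinearMap.range ι = LinearMap.ker (postc k L F) := by
    ext h
    constructor
    · rintro ⟨h', rfl⟩
      rw [LinearMap.mem_ker]
      ext x
      exact (h' x).2
    · intro hh
      have hh' : F ∘ₗ h = 0 := hh
      exact ⟨h.codRestrict _ (fun x => LinearMap.congr_fun hh' x), by ext; rfl⟩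
  rw [this]

theorem hom_prod (M N U : Type u)
    [AddCommGroup M] [Module A M] [Module k M] [IsScalarTower k A M]
    [AddCommGroup N] [Module A N] [Module k N] [IsScalarTower k A N]
    [AddCommGroup U] [Module A U] [Module k U] [IsScalarTower k A U]
    [Module.Finite k M] [Module.Finite k N] [Module.Finite k U] :
    finrank k (M × N →ₗ[A] U) = finrank k (M →ₗ[A] U) + finrank k (N →ₗ[A] U) := by
  have := hom_finite (k := k) (A := A) M U
  have := hom_finite (k := k) (A := A) N U
  rw [← Module.finrank_prod]
  exact (LinearMap.coprodEquiv (R := A) k).finrank_eq.symm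

theorem hom_congr {M N : Type u} (U : Type u)
    [AddCommGroup M] [Module A M] [AddCommGroup N] [Module A N] 
    [AddCommGroup U] [Module A U] [Module k U] [IsScalarTower k A U]
    (e : M ≃ₗ[A] N) :
    finrank k (M →ₗ[A] U) = finrank k (N →ₗ[A] U) := by
  refine LinearEquiv.finrank_eq (LinearEquiv.ofLinearMap (LinearMap.lcomp k U e.symm.toLinearMap)
    (LinearMap.lcomp k U e.toLinearMap) ?_ ?_)
  · ext; simp
  · ext; simp

/-- if Hom dims out of `M`, `N` agree, `N` is a summand of a power of `M`. -/
theorem id_eq_sum {M N : Type u}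
    [AddCommGroup M] [Module A M] [Module k M] [IsScalarTower k A M]
    [AddCommGroup N] [Module A N] [Module k N] [IsScalarTower k A N]
    [Module.Finite k M] [Module.Finite k N]
    (h : ∀ (U : Type u) [AddCommGroup U] [Module A U] [Module k U] [IsScalarTower k A U]
      [Module.Finite k U], finrank k (M →ₗ[A] U) = finrank k (N →ₗ[A] U)) :
    ∃ (r : ℕ) (f : Fin r → (M →ₗ[A] N)) (s : Fin r → (N →ₗ[A] M)),
      ∑ i, f i ∘ₗ s i = LinearMap.id := by
  have := hom_finite (k := k) (A := A) M N
  have := hom_finite (k := k) (A := A) N N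
  let b := Module.finBasis k (M →ₗ[A] N)
  let F : (Fin (finrank k (M →ₗ[A] N)) → M) →ₗ[A] N := LinearMap.lsum A (fun _ => M) ℕ (fun i => b i)
  have hF : ∀ x, F x = ∑ i, b i (x i) := by intro x; simp [F]
  have hM := hom_ker (k := k) M F
  have hN := hom_ker (k := k) N F
  have := sub_finite (k := k) (LinearMap.ker F)
  rw [← h, ← h] at hN
  have hs : LinearMap.range (postc k M F) = ⊤ := by
    rw [eq_top_iff]
    intro g _
    refine ⟨LinearMap.pi (fun i => (b.repr g i) • LinearMap.id), ?_⟩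
    ext x
    show F _ = _
    rw [hF]
    conv_rhs => rw [← b.sum_repr g]
    rw [LinearMap.sum_apply]
    refine Finset.sum_congr rfl fun i _ => ?_
    exact ((b i).restrictScalars k).map_smul _ x
  rw [hs, finrank_top] at hM
  have hN' : LinearMap.range (postc k N F) = ⊤ := by
    apply Submodule.eq_top_of_finrank_eq
    rw [← h]; omega
  obtain ⟨g, hg⟩ := (LinearMap.range_eq_top.mp hN') LinearMap.id
  refine ⟨_, fun i => b i, fun i => LinearMap.proj i ∘ₗ g, ?_⟩
  rw [← hg]
  ext x
  show _ = F (g x)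
  rw [hF]
  simp

theorem local_of_min {p : Type u} [AddCommGroup p] [Module A p] [Module k p] [IsScalarTower k A p]
    [Module.Finite k p] [Nontrivial p]
    (h : ∀ a b : Submodule A p, IsCompl a b → a = ⊥ ∨ b = ⊥) : IsLocalRing (Module.End A p) := by
  have : IsNoetherian A p := isNoetherian_of_tower k inferInstance
  have : IsArtinian A p := isArtinian_of_tower k inferInstance
  refine IsLocalRing.of_isUnit_or_isUnit_one_sub_self fun f => ?_
  obtain ⟨n, hn⟩ := Filter.eventually_atTop.mp f.eventually_isCompl_ker_pow_range_pow
  have hn1 := hn (n+1) (by omega)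
  rcases h _ _ hn1 with h0 | h0
  · left
    have ht : LinearMap.range (f ^ (n+1)) = ⊤ := by
      have := hn1.sup_eq_top; rwa [h0, bot_sup_eq] at this
    have : IsUnit (f ^ (n+1)) := by
      rw [Module.End.isUnit_iff]
      exact ⟨LinearMap.ker_eq_bot.mp h0, LinearMap.range_eq_top.mp ht⟩
    exact (isUnit_pow_iff (by omega)).mp this
  · right
    exact IsNilpotent.isUnit_one_sub ⟨n+1, LinearMap.range_eq_bot.mp h0⟩


theorem exists_local_summand (n : ℕ) : ∀ (N : Type u)
    [AddCommGroup N] [Module A N] [Module k N] [IsScalarTower k A N]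
    [Module.Finite k N] [Nontrivial N], finrank k N = n →
    ∃ (p : Type u) (_ : AddCommGroup p) (_ : Module A p) (_ : Module k p)
      (q : Type u) (_ : AddCommGroup q) (_ : Module A q) (_ : Module k q),
      IsScalarTower k A p ∧ IsScalarTower k A q ∧ Module.Finite k p ∧ Module.Finite k q ∧
      Nontrivial p ∧ IsLocalRing (Module.End A p) ∧ Nonempty ((p × q) ≃ₗ[A] N) := by
  induction n using Nat.strong_induction_on with
  | _ n ih =>
  intro N _ _ _ _ _ _ hN
  by_cases h : ∀ a b : Submodule A N, IsCompl a b → a = ⊥ ∨ b = ⊥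
  · exact ⟨N, inferInstance, inferInstance, inferInstance, PUnit, inferInstance, inferInstance,
      inferInstance, inferInstance, inferInstance, inferInstance, inferInstance, inferInstance,
      local_of_min (k := k) h, ⟨LinearEquiv.prodUnique⟩⟩
  · push Not at h
    obtain ⟨a, b, hab, ha, hb⟩ := h
    have := sub_finite (k := k) a
    have := sub_finite (k := k) b
    have : Nontrivial a := (Submodule.nontrivial_iff_ne_bot).mpr ha
    have : Nontrivial b := (Submodule.nontrivial_iff_ne_bot).mpr hb
    let e := Submodule.prodEquivOfIsCompl a b hab
    have hd := (e.restrictScalars k).finrank_eq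
    rw [Module.finrank_prod] at hd
    have hb0 : 0 < finrank k b := Module.finrank_pos
    obtain ⟨p, _, _, _, q, _, _, _, _, _, _, _, hp, hl, ⟨e'⟩⟩ := ih (finrank k a) (by omega) a rfl
    exact ⟨p, inferInstance, inferInstance, inferInstance, q × b, inferInstance, inferInstance,
      inferInstance, inferInstance, inferInstance, inferInstance, inferInstance, hp, hl,
      ⟨(LinearEquiv.prodAssoc A p q b).symm.trans ((e'.prodCongr (LinearEquiv.refl A b)).trans e)⟩⟩

/-- Auslander–Bongartz. -/
theorem iso_of_hom_eq (n : ℕ) : ∀ (M N : Type u)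
    [AddCommGroup M] [Module A M] [Module k M] [IsScalarTower k A M]
    [AddCommGroup N] [Module A N] [Module k N] [IsScalarTower k A N]
    [Module.Finite k M] [Module.Finite k N], finrank k M = n →
    (∀ (U : Type u) [AddCommGroup U] [Module A U] [Module k U] [IsScalarTower k A U]
      [Module.Finite k U], finrank k (M →ₗ[A] U) = finrank k (N →ₗ[A] U)) →
    Nonempty (M ≃ₗ[A] N) := by
  induction n using Nat.strong_induction_on with
  | _ n ih =>
  intro M N _ _ _ _ _ _ _ _ _ _ hn h
  rcases subsingleton_or_nontrivial N with hN | hN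
  · have : Subsingleton M := by
      have := hom_finite (k := k) (A := A) M M
      have h1 := h M
      rw [Module.finrank_zero_of_subsingleton (M := N →ₗ[A] M), Module.finrank_zero_iff] at h1
      refine ⟨fun x y => ?_⟩
      have h2 : (LinearMap.id : M →ₗ[A] M) = 0 := Subsingleton.elim _ _
      have hx := LinearMap.congr_fun h2 x
      have hy := LinearMap.congr_fun h2 y
      simp only [LinearMap.id_apply, LinearMap.zero_apply] at hx hy
      rw [hx, hy]
    exact ⟨0⟩
  obtain ⟨p, _, _, _, q, _, _, _, _, _, _, _, hp, hl, ⟨e⟩⟩ :=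
    exists_local_summand (k := k) (A := A) _ N rfl
  obtain ⟨r, f, s, hfs⟩ := id_eq_sum (k := k) h
  let i : p →ₗ[A] N := e.toLinearMap ∘ₗ LinearMap.inl A p q
  let π : N →ₗ[A] p := LinearMap.fst A p q ∘ₗ e.symm.toLinearMap
  have hsum : ∑ t, ((π ∘ₗ f t) ∘ₗ (s t ∘ₗ i) : Module.End A p) = 1 := by
    ext x
    have := congrArg π (LinearMap.congr_fun hfs (i x))
    simp only [LinearMap.sum_apply, map_sum, LinearMap.comp_apply] at this ⊢
    rw [this]
    simp [i, π]
  obtain ⟨t, -, ht⟩ := IsLocalRing.exists_of_isUnit_sum (hsum ▸ isUnit_one)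
  obtain ⟨v, hv⟩ := ht
  let j : p →ₗ[A] M := s t ∘ₗ i
  let ρ : M →ₗ[A] p := (↑v⁻¹ : Module.End A p) ∘ₗ (π ∘ₗ f t)
  have hρ : ∀ x, ρ (j x) = x := by
    intro x
    have h1 : (↑v⁻¹ * ↑v : Module.End A p) = 1 := v.inv_mul
    rw [hv] at h1
    exact LinearMap.congr_fun h1 x
  let K := LinearMap.ker ρ
  have := sub_finite (k := k) K
  let eM : (p × K) ≃ₗ[A] M := 
    LinearEquiv.ofLinearMap (LinearMap.coprod j K.subtype)
      (LinearMap.prod ρ ((LinearMap.id - j ∘ₗ ρ).codRestrict K (fun x => by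
        simp [K, hρ])))
      (by ext x; simp)
      (by
        ext x
        · simp [hρ]
        · simp [hρ]
        · have : ρ (x : M) = 0 := x.2
          simp [this]
        · have : ρ (x : M) = 0 := x.2
          simp [this])
  have hd := (eM.restrictScalars k).finrank_eq
  rw [Module.finrank_prod] at hd
  have hp0 : 0 < finrank k p := Module.finrank_pos
  obtain ⟨e'⟩ := ih (finrank k K) (by omega) K q rfl (by
    intro U _ _ _ _ _
    have h1 := h U
    rw [← hom_congr U eM, ← hom_congr U e, hom_prod, hom_prod] at h1
    omega)
  exact ⟨eM.symm.trans (((LinearEquiv.refl A p).prodCongr e').trans e)⟩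

/-- The coinduced module `Hom_k(A, U)`. -/
def Coind (k A U : Type u) [Field k] [Ring A] [Algebra k A] [AddCommGroup U] [Module k U] :
    Type u := A →ₗ[k] U

section
variable (k A) (U : Type u) [AddCommGroup U] [Module k U]

instance : AddCommGroup (Coind k A U) := inferInstanceAs (AddCommGroup (A →ₗ[k] U))
instance : Module k (Coind k A U) := inferInstanceAs (Module k (A →ₗ[k] U))
instance [FiniteDimensional k A] [Module.Finite k U] : Module.Finite k (Coind k A U) :=
  inferInstanceAs (Module.Finite k (A →ₗ[k] U))

instance : Module A (Coind k A U) where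
  smul a φ := LinearMap.comp (show A →ₗ[k] U from φ) (LinearMap.mulRight k a)
  one_smul φ := LinearMap.ext fun x => congrArg (show A →ₗ[k] U from φ) (mul_one x)
  mul_smul a b φ := LinearMap.ext fun x => 
    congrArg (show A →ₗ[k] U from φ) (mul_assoc x a b).symm
  smul_zero _ := rfl
  smul_add _ _ _ := rfl
  add_smul a b φ := LinearMap.ext fun x =>
    (congrArg (show A →ₗ[k] U from φ) (mul_add x a b)).trans (map_add (show A →ₗ[k] U from φ) _ _)
  zero_smul φ := LinearMap.ext fun x =>
    (congrArg (show A →ₗ[k] U from φ) (mul_zero x)).trans (map_zero (show A →ₗ[k] U from φ))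

/-- evaluation -/
def Coind.ev (φ : Coind k A U) : A →ₗ[k] U := φ

/-- constructor -/
def Coind.mk (φ : A →ₗ[k] U) : Coind k A U := φ

theorem Coind.ev_mk (φ : A →ₗ[k] U) (x : A) : Coind.ev k A U (Coind.mk k A U φ) x = φ x := rfl

theorem Coind.ev_smul (a : A) (φ : Coind k A U) (x : A) :
    Coind.ev k A U (a • φ) x = Coind.ev k A U φ (x * a) := rfl

theorem Coind.ev_ksmul (a : k) (φ : Coind k A U) (x : A) :
    Coind.ev k A U (a • φ) x = a • Coind.ev k A U φ x := rfl

theorem Coind.ev_add (φ ψ : Coind k A U) (x : A) :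
    Coind.ev k A U (φ + ψ) x = Coind.ev k A U φ x + Coind.ev k A U ψ x := rfl

theorem Coind.ext {φ ψ : Coind k A U} (h : ∀ x, Coind.ev k A U φ x = Coind.ev k A U ψ x) :
    φ = ψ := LinearMap.ext h

instance : IsScalarTower k A (Coind k A U) where
  smul_assoc c a φ := by
    apply Coind.ext
    intro x
    rw [Coind.ev_smul, Coind.ev_ksmul, Coind.ev_smul, mul_smul_comm, map_smul]

end

theorem hom_coind (R U : Type u) 
    [AddCommGroup R] [Module A R] [Module k R] [IsScalarTower k A R]
    [AddCommGroup U] [Module k U] :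
    finrank k (R →ₗ[A] Coind k A U) = finrank k (R →ₗ[k] U) := by
  refine LinearEquiv.finrank_eq 
    { toFun := fun h => 
        { toFun := fun x => Coind.ev k A U (h x) 1
          map_add' := fun x y => by rw [map_add, Coind.ev_add]
          map_smul' := fun c x => by
            rw [← algebraMap_smul A c x, map_smul, Coind.ev_smul, one_mul,
              ← mul_one (algebraMap k A c), ← Algebra.smul_def, map_smul]; rfl }
      invFun := fun h => 
        { toFun := fun x => Coind.mk k A U (h ∘ₗ (LinearMap.toSpanSingleton A R x).restrictScalars k)
          map_add' := fun x y => by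
            apply Coind.ext
            intro a
            rw [Coind.ev_add]
            simp [Coind.ev_mk]
          map_smul' := fun b x => by
            apply Coind.ext
            intro a
            rw [RingHom.id_apply, Coind.ev_smul]
            simp [Coind.ev_mk, mul_smul] }
      map_add' := fun x y => by ext; rfl
      map_smul' := fun x y => by ext; rfl
      left_inv := fun h => by
        refine LinearMap.ext fun x => ?_
        apply Coind.ext
        intro a
        show Coind.ev k A U (h (a • x)) 1 = _
        rw [map_smul, Coind.ev_smul, one_mul]
      right_inv := fun h => by
        refine LinearMap.ext fun x => ?_
        show h ((1 : A) • x) = h x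
        rw [one_smul] }

theorem proj_hom_eq [FiniteDimensional k A] (R R' : Type u) 
    [AddCommGroup R] [Module A R] [Module k R] [IsScalarTower k A R]
    [AddCommGroup R'] [Module A R'] [Module k R'] [IsScalarTower k A R']
    [Module.Finite k R] [Module.Finite k R'] [Module.Projective A R] [Module.Projective A R']
    (hd : finrank k R = finrank k R')
    (h : ∀ (U : Type u) [AddCommGroup U] [Module A U] [Module k U] [IsScalarTower k A U]
      [Module.Finite k U], finrank k (R →ₗ[A] U) ≤ finrank k (R' →ₗ[A] U))
    (U : Type u) [AddCommGroup U] [Module A U] [Module k U] [IsScalarTower k A U]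
      [Module.Finite k U] : finrank k (R →ₗ[A] U) = finrank k (R' →ₗ[A] U) := by
  let ι : U →ₗ[A] Coind k A U :=
    { toFun := fun u => Coind.mk k A U ((LinearMap.toSpanSingleton A U u).restrictScalars k)
      map_add' := fun x y => by
        apply Coind.ext
        intro a
        rw [Coind.ev_add]
        simp [Coind.ev_mk]
      map_smul' := fun b x => by
        apply Coind.ext
        intro a
        rw [RingHom.id_apply, Coind.ev_smul]
        simp [Coind.ev_mk, mul_smul] }
  have hι : Function.Injective ι := by
    intro x y hxy
    have : Coind.ev k A U (ι x) 1 = Coind.ev k A U (ι y) 1 := by rw [hxy]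
    simpa [ι, Coind.ev_mk] using this
  let S := LinearMap.range ι
  have := sub_finite (k := k) S
  have : Module.Finite k (Coind k A U ⧸ S) :=
    Module.Finite.of_surjective (S.mkQ.restrictScalars k) S.mkQ_surjective
  have key : ∀ (T : Type u) [AddCommGroup T] [Module A T] [Module k T] [IsScalarTower k A T]
      [Module.Finite k T] [Module.Projective A T], 
      finrank k (T →ₗ[A] Coind k A U ⧸ S) + finrank k (T →ₗ[A] U) = finrank k T * finrank k U := by
    intro T _ _ _ _ _ _
    have h1 := hom_ker (k := k) T S.mkQ
    have h2 : LinearMap.range (postc k T S.mkQ) = ⊤ := by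
      rw [LinearMap.range_eq_top]
      intro g
      exact Module.projective_lifting_property S.mkQ g S.mkQ_surjective
    rw [h2, finrank_top, hom_coind, Module.finrank_linearMap k k] at h1
    rw [← h1]
    congr 1
    let e : U ≃ₗ[A] LinearMap.ker S.mkQ := (LinearEquiv.ofInjective ι hι).trans
      (LinearEquiv.ofEq _ _ (by rw [Submodule.ker_mkQ]))
    refine LinearEquiv.finrank_eq (LinearEquiv.ofLinearMap (postc k T e.toLinearMap)
      (postc k T e.symm.toLinearMap) ?_ ?_)
    · refine LinearMap.ext fun g => LinearMap.ext fun x => ?_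
      exact e.apply_symm_apply _
    · refine LinearMap.ext fun g => LinearMap.ext fun x => ?_
      exact e.symm_apply_apply _
  have k1 := key R
  have k2 := key R'
  have h1 := h U
  have h2 := h (Coind k A U ⧸ S)
  rw [hd] at k1
  omega


section Syz
variable {B : Type u} [Ring B]

/-- Schanuel's lemma. -/
theorem schanuel {P Q M : Type u} [AddCommGroup P] [Module B P] [AddCommGroup Q] [Module B Q]
    [AddCommGroup M] [Module B M] [Module.Projective B P] [Module.Projective B Q]
    (p : P →ₗ[B] M) (q : Q →ₗ[B] M) (hp : Function.Surjective p) (hq : Function.Surjective q) :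
    Nonempty ((LinearMap.ker p × Q) ≃ₗ[B] (LinearMap.ker q × P)) := by
  obtain ⟨α, hα⟩ := Module.projective_lifting_property q p hq
  obtain ⟨β, hβ⟩ := Module.projective_lifting_property p q hp
  have hα' : ∀ x, q (α x) = p x := fun x => LinearMap.congr_fun hα x
  have hβ' : ∀ x, p (β x) = q x := fun x => LinearMap.congr_fun hβ x
  let a : (LinearMap.ker p × Q) →ₗ[B] P :=
    (LinearMap.ker p).subtype ∘ₗ LinearMap.fst B _ _ + β ∘ₗ LinearMap.snd B _ _
  let b : (LinearMap.ker q × P) →ₗ[B] Q :=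
    (LinearMap.ker q).subtype ∘ₗ LinearMap.fst B _ _ + α ∘ₗ LinearMap.snd B _ _
  have ha : ∀ x, a x = (x.1 : P) + β x.2 := fun _ => rfl
  have hb : ∀ x, b x = (x.1 : Q) + α x.2 := fun _ => rfl
  have hk1 : ∀ x : LinearMap.ker p, p x = 0 := fun x => x.2
  have hk2 : ∀ x : LinearMap.ker q, q x = 0 := fun x => x.2
  have h1 : ∀ x, (LinearMap.snd B (LinearMap.ker p) Q - α ∘ₗ a) x ∈ LinearMap.ker q := by
    intro x; simp [ha, hα', hβ', hk1]
  have h2 : ∀ x, (LinearMap.snd B (LinearMap.ker q) P - β ∘ₗ b) x ∈ LinearMap.ker p := by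
    intro x; simp [hb, hα', hβ', hk2]
  refine ⟨LinearEquiv.ofLinearMap
    (LinearMap.prod ((LinearMap.snd B _ _ - α ∘ₗ a).codRestrict (LinearMap.ker q) h1) a)
    (LinearMap.prod ((LinearMap.snd B _ _ - β ∘ₗ b).codRestrict (LinearMap.ker p) h2) b) ?_ ?_⟩
  · refine LinearMap.ext fun x => ?_
    refine Prod.ext (Subtype.ext ?_) ?_ <;> simp [ha, hb]
  · refine LinearMap.ext fun x => ?_
    refine Prod.ext (Subtype.ext ?_) ?_ <;> simp [ha, hb]

theorem deg_syz [IsNoetherianRing B] {M N M1 N1 PM PN : Type u}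
    [AddCommGroup M] [Module B M] [AddCommGroup N] [Module B N]
    [AddCommGroup M1] [Module B M1] [AddCommGroup N1] [Module B N1]
    [AddCommGroup PM] [Module B PM] [AddCommGroup PN] [Module B PN]
    [Module.Projective B PM] [Module.Projective B PN]
    (iM : M1 →ₗ[B] PM) (πM : PM →ₗ[B] M) (hiM : Function.Injective iM)
    (hπM : Function.Surjective πM) (hM : LinearMap.range iM = LinearMap.ker πM)
    (iN : N1 →ₗ[B] PN) (πN : PN →ₗ[B] N) (hiN : Function.Injective iN)
    (hπN : Function.Surjective πN) (hN : LinearMap.range iN = LinearMap.ker πN)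
    (h : DegLE B M N) :
    ∃ (F : Type u) (_ : AddCommGroup F) (_ : Module B F), Module.Finite B F ∧
      Module.Projective B F ∧ DegLE B (M1 × (PN × F)) (N1 × (PM × F)) := by
  obtain ⟨Z, _, _, hZ, f, g, hf, hg, hfg⟩ := h
  obtain ⟨n, πZ, hπZ⟩ := Module.Finite.exists_fin' B Z
  obtain ⟨s, hs⟩ := Module.projective_lifting_property g πZ hg
  have hs' : ∀ x, g (s x) = πZ x := fun x => LinearMap.congr_fun hs x
  have hgf : ∀ x, g (f x) = 0 := fun x => by
    have : f x ∈ LinearMap.range f := ⟨x, rfl⟩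
    rw [hfg] at this; exact this
  have hNi : ∀ x, πN (iN x) = 0 := fun x => by
    have : iN x ∈ LinearMap.range iN := ⟨x, rfl⟩
    rw [hN] at this; exact this
  let F := Fin n → B
  let c : (PN × F) →ₗ[B] M × Z := LinearMap.coprod (f ∘ₗ πN) s
  have hc' : ∀ x, c x = f (πN x.1) + s x.2 := fun _ => rfl
  have hc : Function.Surjective c := by
    intro y
    obtain ⟨b, hb⟩ := hπZ (g y)
    have : y - s b ∈ LinearMap.range f := by
      rw [hfg, LinearMap.mem_ker, map_sub, hs', hb, sub_self]
    obtain ⟨x, hx⟩ := this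
    obtain ⟨a, rfl⟩ := hπN x
    exact ⟨(a, b), by rw [hc', hx]; simp⟩
  let d : (PM × F) →ₗ[B] M × Z := LinearMap.prodMap πM πZ
  have hd : Function.Surjective d := Function.Surjective.prodMap hπM hπZ
  obtain ⟨e⟩ := schanuel c d hc hd
  let Z1 := LinearMap.ker πZ
  have hgc : ∀ x, g (c x) = πZ x.2 := fun x => by rw [hc', map_add, hgf, hs', zero_add]
  -- the map K → Z1
  let g1 : LinearMap.ker c →ₗ[B] Z1 :=
    (LinearMap.snd B PN F ∘ₗ (LinearMap.ker c).subtype).codRestrict Z1 (fun x => by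
      have : c x = 0 := x.2
      rw [LinearMap.mem_ker]
      show πZ (x : PN × F).2 = 0
      rw [← hgc, this, map_zero])
  have hg1 : ∀ x, (g1 x : F) = (x : PN × F).2 := fun _ => rfl
  let f1 : N1 →ₗ[B] LinearMap.ker c :=
    (LinearMap.inl B PN F ∘ₗ iN).codRestrict _ (fun x => by
      rw [LinearMap.mem_ker, hc']; simp [hNi])
  have hf1 : ∀ x, (f1 x : PN × F) = (iN x, 0) := fun _ => rfl
  -- identification of the kernel of d
  let eM : M1 ≃ₗ[B] LinearMap.ker πM :=
    (LinearEquiv.ofInjective iM hiM).trans (LinearEquiv.ofEq _ _ hM)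
  let ed : (LinearMap.ker πM × Z1) ≃ₗ[B] LinearMap.ker d :=
    LinearEquiv.ofLinearMap
      ((LinearMap.prodMap (LinearMap.ker πM).subtype Z1.subtype).codRestrict (LinearMap.ker d)
        (fun x => Prod.ext x.1.2 x.2.2))
      (LinearMap.prod
        ((LinearMap.fst B PM F ∘ₗ (LinearMap.ker d).subtype).codRestrict (LinearMap.ker πM)
          (fun x => congrArg Prod.fst x.2))
        ((LinearMap.snd B PM F ∘ₗ (LinearMap.ker d).subtype).codRestrict Z1
          (fun x => congrArg Prod.snd x.2)))
      (by refine LinearMap.ext fun x => ?_; rfl)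
      (by refine LinearMap.ext fun x => ?_; rfl)
  let E : (LinearMap.ker c × (PM × F)) ≃ₗ[B] ((M1 × (PN × F)) × Z1) :=
    e.trans (((ed.symm.trans (eM.symm.prodCongr (LinearEquiv.refl B Z1))).prodCongr
      (LinearEquiv.refl B _)).trans ((LinearEquiv.prodAssoc B M1 Z1 (PN × F)).trans
        (((LinearEquiv.refl B M1).prodCongr (LinearEquiv.prodComm B Z1 (PN × F))).trans
          (LinearEquiv.prodAssoc B M1 (PN × F) Z1).symm)))
  refine ⟨F, inferInstance, inferInstance, inferInstance, inferInstance, Z1, inferInstance,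
    inferInstance, inferInstance, E.toLinearMap ∘ₗ LinearMap.prodMap f1 LinearMap.id,
    g1 ∘ₗ LinearMap.fst B _ _ ∘ₗ E.symm.toLinearMap, ?_, ?_, ?_⟩
  · have hf1i : Function.Injective f1 := by
      intro x y hxy
      have := congrArg (fun t : LinearMap.ker c => (t : PN × F).1) hxy
      exact hiN this
    rintro ⟨x, v⟩ ⟨y, w⟩ hxy
    have hxy' : (f1 x, v) = (f1 y, w) := E.injective hxy
    obtain ⟨h1, h2⟩ := Prod.mk.inj hxy'
    exact Prod.ext (hf1i h1) h2
  · have h1 : Function.Surjective g1 := by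
      intro z
      have : s z ∈ LinearMap.range f := by
        rw [hfg, LinearMap.mem_ker, hs']; exact z.2
      obtain ⟨x, hx⟩ := this
      obtain ⟨a, rfl⟩ := hπN x
      refine ⟨⟨(-a, z), ?_⟩, Subtype.ext rfl⟩
      rw [LinearMap.mem_ker, hc']
      simp [hx]
    exact h1.comp (Prod.fst_surjective.comp E.symm.surjective)
  · ext y
    obtain ⟨⟨x, w⟩, rfl⟩ := E.surjective y
    constructor
    · rintro ⟨⟨a, b⟩, hab⟩
      have hab' : (f1 a, b) = (x, w) := E.injective hab
      obtain ⟨rfl, rfl⟩ := Prod.mk.inj hab'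
      rw [LinearMap.mem_ker]
      simp only [LinearMap.comp_apply, LinearEquiv.coe_coe, LinearEquiv.symm_apply_apply,
        LinearMap.fst_apply]
      exact Subtype.ext (by rw [hg1, hf1]; rfl)
    · intro hy
      rw [LinearMap.mem_ker] at hy
      simp only [LinearMap.comp_apply, LinearEquiv.coe_coe, LinearEquiv.symm_apply_apply,
        LinearMap.fst_apply] at hy
      have h2 : (x : PN × F).2 = 0 := by rw [← hg1, hy]; rfl
      have h3 : c x = 0 := x.2
      rw [hc', h2, map_zero, add_zero] at h3
      have h4 : πN (x : PN × F).1 = 0 := hf (by rw [h3, map_zero])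
      have h5 : (x : PN × F).1 ∈ LinearMap.range iN := by rw [hN]; exact h4
      obtain ⟨a, ha⟩ := h5
      refine ⟨(a, w), ?_⟩
      have : f1 a = x := Subtype.ext (by rw [hf1, ha, ← h2])
      simp [this]

theorem st_syz [IsNoetherianRing B] {X Y X1 Y1 PX PY : Type u}
    [AddCommGroup X] [Module B X] [AddCommGroup Y] [Module B Y]
    [AddCommGroup X1] [Module B X1] [AddCommGroup Y1] [Module B Y1]
    [AddCommGroup PX] [Module B PX] [AddCommGroup PY] [Module B PY]
    [Module.Projective B PX] [Module.Projective B PY]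
    [Module.Finite B PX] [Module.Finite B PY]
    (iX : X1 →ₗ[B] PX) (πX : PX →ₗ[B] X) (hiX : Function.Injective iX)
    (hπX : Function.Surjective πX) (hX : LinearMap.range iX = LinearMap.ker πX)
    (iY : Y1 →ₗ[B] PY) (πY : PY →ₗ[B] Y) (hiY : Function.Injective iY)
    (hπY : Function.Surjective πY) (hY : LinearMap.range iY = LinearMap.ker πY)
    (h : StDegLE B X Y) : StDegLE B X1 Y1 := by
  obtain ⟨P, _, _, Q, _, _, _, _, _, _, h⟩ := h
  have key : ∀ {X X1 PX P : Type u} [AddCommGroup X] [Module B X] [AddCommGroup X1] [Module B X1]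
      [AddCommGroup PX] [Module B PX] [AddCommGroup P] [Module B P]
      (iX : X1 →ₗ[B] PX) (πX : PX →ₗ[B] X) (_ : LinearMap.range iX = LinearMap.ker πX),
      LinearMap.range (LinearMap.inl B PX P ∘ₗ iX) =
        LinearMap.ker (LinearMap.prodMap πX (LinearMap.id : P →ₗ[B] P)) := by
    intro X X1 PX P _ _ _ _ _ _ _ _ iX πX hX
    rw [LinearMap.ker_prodMap, LinearMap.range_comp, hX, LinearMap.ker_id,
      Submodule.map_inl]
  obtain ⟨F, _, _, _, _, hF⟩ := deg_syz (LinearMap.inl B PX P ∘ₗ iX)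
    (LinearMap.prodMap πX (LinearMap.id : P →ₗ[B] P)) (LinearMap.inl_injective.comp hiX)
    (Function.Surjective.prodMap hπX Function.surjective_id) (key iX πX hX)
    (LinearMap.inl B PY Q ∘ₗ iY)
    (LinearMap.prodMap πY (LinearMap.id : Q →ₗ[B] Q)) (LinearMap.inl_injective.comp hiY)
    (Function.Surjective.prodMap hπY Function.surjective_id) (key iY πY hY) h
  exact ⟨_, inferInstance, inferInstance, _, inferInstance, inferInstance, inferInstance,
    inferInstance, inferInstance, inferInstance, hF⟩

theorem st_shift [IsNoetherianRing B] {Xs Ys : ℕ → Type u}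
    [∀ i, AddCommGroup (Xs i)] [∀ i, Module B (Xs i)]
    [∀ i, AddCommGroup (Ys i)] [∀ i, Module B (Ys i)]
    (hXs : IsSyzygySeq B Xs) (hYs : IsSyzygySeq B Ys) (i j t : ℕ)
    (h : StDegLE B (Xs i) (Ys j)) : StDegLE B (Xs (i + t)) (Ys (j + t)) := by
  induction t with
  | zero => exact h
  | succ t ih =>
    obtain ⟨PX, _, _, _, _, iX, πX, h1, h2, h3⟩ := hXs (i + t)
    obtain ⟨PY, _, _, _, _, iY, πY, h4, h5, h6⟩ := hYs (j + t)
    exact st_syz iX πX h1 h2 h3 iY πY h4 h5 h6 ih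

end Syz

theorem deg_hom [FiniteDimensional k A] (M N : Type u)
    [AddCommGroup M] [Module A M] [Module k M] [IsScalarTower k A M]
    [AddCommGroup N] [Module A N] [Module k N] [IsScalarTower k A N]
    [Module.Finite k M] [Module.Finite k N] (h : DegLE A M N) :
    finrank k M = finrank k N ∧
    ∀ (U : Type u) [AddCommGroup U] [Module A U] [Module k U] [IsScalarTower k A U]
      [Module.Finite k U], finrank k (M →ₗ[A] U) ≤ finrank k (N →ₗ[A] U) := by
  obtain ⟨Z, _, _, hZ, f, g, hf, hg, hfg⟩ := h
  let : Module k Z := Module.compHom Z (algebraMap k A)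
  have : IsScalarTower k A Z := IsScalarTower.of_algebraMap_smul fun _ _ => rfl
  have : Module.Finite k Z := Module.Finite.trans A Z
  constructor
  · have h1 := LinearMap.finrank_range_add_finrank_ker (g.restrictScalars k)
    have h2 : LinearMap.range (g.restrictScalars k) = ⊤ := LinearMap.range_eq_top.mpr hg
    have h3 : LinearMap.ker (g.restrictScalars k) = LinearMap.range (f.restrictScalars k) := by
      ext x
      exact (SetLike.ext_iff.mp hfg x).symm
    rw [h2, finrank_top, h3,
      LinearMap.finrank_range_of_inj (f := f.restrictScalars k) hf, Module.finrank_prod] at h1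
    omega
  · intro U _ _ _ _ _
    have h1 := hom_le_of_exact (k := k) U f g hg hfg
    rw [hom_prod] at h1
    omega

theorem st_antisymm [FiniteDimensional k A] (X Y : Type u)
    [AddCommGroup X] [Module A X] [AddCommGroup Y] [Module A Y]
    [Module.Finite A X] [Module.Finite A Y] (h₁ : StDegLE A X Y) (h₂ : StDegLE A Y X) :
    ∃ (P : Type u) (_ : AddCommGroup P) (_ : Module A P)
        (Q : Type u) (_ : AddCommGroup Q) (_ : Module A Q),
        Module.Finite A P ∧ Module.Projective A P ∧
        Module.Finite A Q ∧ Module.Projective A Q ∧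
        Nonempty ((X × P) ≃ₗ[A] (Y × Q)) := by
  obtain ⟨P, _, _, Q, _, _, _, _, _, _, h⟩ := h₁
  obtain ⟨P', _, _, Q', _, _, _, _, _, _, h'⟩ := h₂
  refine ⟨P, inferInstance, inferInstance, Q, inferInstance, inferInstance, inferInstance,
    inferInstance, inferInstance, inferInstance, ?_⟩
  let : Module k X := Module.compHom X (algebraMap k A)
  have : IsScalarTower k A X := IsScalarTower.of_algebraMap_smul fun _ _ => rfl
  have : Module.Finite k X := Module.Finite.trans A X
  let : Module k Y := Module.compHom Y (algebraMap k A)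
  have : IsScalarTower k A Y := IsScalarTower.of_algebraMap_smul fun _ _ => rfl
  have : Module.Finite k Y := Module.Finite.trans A Y
  let : Module k P := Module.compHom P (algebraMap k A)
  have : IsScalarTower k A P := IsScalarTower.of_algebraMap_smul fun _ _ => rfl
  have : Module.Finite k P := Module.Finite.trans A P
  let : Module k Q := Module.compHom Q (algebraMap k A)
  have : IsScalarTower k A Q := IsScalarTower.of_algebraMap_smul fun _ _ => rfl
  have : Module.Finite k Q := Module.Finite.trans A Q
  let : Module k P' := Module.compHom P' (algebraMap k A)
  have : IsScalarTower k A P' := IsScalarTower.of_algebraMap_smul fun _ _ => rfl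
  have : Module.Finite k P' := Module.Finite.trans A P'
  let : Module k Q' := Module.compHom Q' (algebraMap k A)
  have : IsScalarTower k A Q' := IsScalarTower.of_algebraMap_smul fun _ _ => rfl
  have : Module.Finite k Q' := Module.Finite.trans A Q'
  obtain ⟨d1, u1⟩ := deg_hom (k := k) _ _ h
  obtain ⟨d2, u2⟩ := deg_hom (k := k) _ _ h'
  simp only [Module.finrank_prod] at d1 d2
  have hR := proj_hom_eq (k := k) (A := A) (P × P') (Q × Q')
    (by simp only [Module.finrank_prod]; omega)
    (by
      intro U _ _ _ _ _
      have a1 := u1 U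
      have a2 := u2 U
      simp only [hom_prod] at a1 a2 ⊢
      omega)
  refine iso_of_hom_eq (k := k) _ (X × P) (Y × Q) rfl ?_
  intro U _ _ _ _ _
  have a1 := u1 U
  have a2 := u2 U
  have a3 := hR U
  simp only [hom_prod] at a1 a2 a3 ⊢
  omega

end QSD

/-- Antisymmetry of quasi-stable degeneration. -/
theorem quasi_stable_degeneration_antisymm
    (k : Type u) [Field k] (A : Type u) [Ring A] [Algebra k A] [FiniteDimensional k A]
    (Xs : ℕ → Type u) [∀ i, AddCommGroup (Xs i)] [∀ i, Module A (Xs i)]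
    [∀ i, Module.Finite A (Xs i)]
    (Ys : ℕ → Type u) [∀ i, AddCommGroup (Ys i)] [∀ i, Module A (Ys i)]
    [∀ i, Module.Finite A (Ys i)]
    (hXs : IsSyzygySeq A Xs) (hYs : IsSyzygySeq A Ys)
    (m n : ℤ)
    (h₁ : ∃ k₁ : ℤ, m ≤ k₁ ∧ n ≤ k₁ ∧ StDegLE A (Xs (k₁ - m).toNat) (Ys (k₁ - n).toNat))
    (h₂ : ∃ k₂ : ℤ, m ≤ k₂ ∧ n ≤ k₂ ∧ StDegLE A (Ys (k₂ - n).toNat) (Xs (k₂ - m).toNat)) :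
    ∃ k : ℤ, m ≤ k ∧ n ≤ k ∧
      ∃ (P : Type u) (_ : AddCommGroup P) (_ : Module A P)
        (Q : Type u) (_ : AddCommGroup Q) (_ : Module A Q),
        Module.Finite A P ∧ Module.Projective A P ∧
        Module.Finite A Q ∧ Module.Projective A Q ∧
        Nonempty ((Xs (k - m).toNat × P) ≃ₗ[A] (Ys (k - n).toNat × Q)) := by
  obtain ⟨k₁, hm₁, hn₁, h₁⟩ := h₁
  obtain ⟨k₂, hm₂, hn₂, h₂⟩ := h₂
  have : IsNoetherianRing A := isNoetherian_of_tower k inferInstance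
  have e : ∀ a b c : ℤ, c ≤ a → a ≤ b → (a - c).toNat + (b - a).toNat = (b - c).toNat := by
    intro a b c _ _; omega
  have h₁' := st_shift hXs hYs _ _ (max k₁ k₂ - k₁).toNat h₁
  have h₂' := st_shift hYs hXs _ _ (max k₁ k₂ - k₂).toNat h₂
  rw [e _ _ _ hm₁ (le_max_left _ _), e _ _ _ hn₁ (le_max_left _ _)] at h₁'
  rw [e _ _ _ hm₂ (le_max_right _ _), e _ _ _ hn₂ (le_max_right _ _)] at h₂'
  exact ⟨max k₁ k₂, hm₁.trans (le_max_left _ _), hn₁.trans (le_max_left _ _),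
    st_antisymm (k := k) _ _ h₁' h₂'⟩
end
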